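/- arXiv:1810.01315 — 11 statements merged into one kernel-verified Lean document; each statement's English description precedes it below -/
import Mathlib

section
/- For every homeomorphism 𝔞 : 𝔸 → 𝔸 of the Alexandroff square, 𝔞 maps the diagonal Δ onto Δ, and 𝔞 maps the two-point set {P₁, P₃} onto {P₁, P₃}. -/
open Set

/-- The unit interval `[0,1]` with its Euclidean (subspace) topology. -/
local notation "𝕀" => unitInterval

/-- The generating family for the Alexandroff square topology on `[0,1] × [0,1]`:
sets `{x} × U` with `U` open in `𝕀` and `x ∉ U`, together with sets
`([0,1] × U) \ (F × [0,1])` with `U` open in `𝕀` and `F` finite. -/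
def alexBasis : Set (Set (𝕀 × 𝕀)) :=
  {S | (∃ (x : 𝕀) (U : Set 𝕀), IsOpen U ∧ x ∉ U ∧ S = ({x} : Set 𝕀) ×ˢ U) ∨
       (∃ (U F : Set 𝕀), IsOpen U ∧ F.Finite ∧ S = ((univ : Set 𝕀) ×ˢ U) \ (F ×ˢ (univ : Set 𝕀)))}

/-- The Alexandroff square topology. -/
def alexTop : TopologicalSpace (𝕀 × 𝕀) := TopologicalSpace.generateFrom alexBasis

/-- The diagonal. -/
def diag : Set (𝕀 × 𝕀) := {p : 𝕀 × 𝕀 | p.1 = p.2}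

def P₁ : 𝕀 × 𝕀 := (0, 0)
def P₃ : 𝕀 × 𝕀 := (1, 1)

theorem alex_snd_cont : @Continuous (𝕀 × 𝕀) 𝕀 alexTop _ Prod.snd := by
  let _ := alexTop
  refine continuous_def.2 fun U hU => ?_
  apply TopologicalSpace.isOpen_generateFrom_of_mem
  right
  exact ⟨U, ∅, hU, Set.finite_empty, by ext p; simp⟩

theorem alex_diag_cont : @Continuous 𝕀 (𝕀 × 𝕀) _ alexTop (fun t => (t, t)) := by
  refine continuous_generateFrom_iff.2 ?_
  rintro S (⟨x, U, hU, hx, rfl⟩ | ⟨U, F, hU, hF, rfl⟩)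
  · convert isOpen_empty
    ext t
    simp only [mem_preimage, mem_prod, mem_singleton_iff, mem_empty_iff_false, iff_false]
    rintro ⟨rfl, h⟩
    exact hx h
  · convert hU.sdiff hF.isClosed using 1
    ext t
    simp

theorem alex_open_finite (x : 𝕀) (S : Set (𝕀 × 𝕀)) (hS : @IsOpen _ alexTop S)
    (hx : (x, x) ∈ S) : {z : 𝕀 | (z, x) ∉ S}.Finite := by
  induction hS with
  | basic S h =>
    rcases h with ⟨y, U, hU, hy, rfl⟩ | ⟨U, F, hU, hF, rfl⟩
    · obtain ⟨h1, h2⟩ := hx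
      simp only [mem_singleton_iff] at h1
      subst h1
      exact absurd h2 hy
    · refine hF.subset fun z hz => ?_
      by_contra hzF
      exact hz ⟨⟨mem_univ _, hx.1.2⟩, fun h => hzF h.1⟩
  | univ => simp
  | inter s t _ _ ihs iht =>
    refine ((ihs hx.1).union (iht hx.2)).subset fun z hz => ?_
    by_contra h
    simp only [mem_union, mem_ofPred_eq, not_or, not_not] at h
    exact hz h
  | sUnion T _ ih =>
    obtain ⟨t, ht, hxt⟩ := hx
    exact (ih t ht hxt).subset fun z hz h => hz ⟨t, ht, h⟩

theorem alex_gdelta_iff (p : 𝕀 × 𝕀) : @IsGδ _ alexTop {p} ↔ p ∉ diag := by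
  let _ := alexTop
  obtain ⟨x, y⟩ := p
  constructor
  · rintro ⟨T, hT, hc, hE⟩ hd
    have hxy : x = y := hd
    subst hxy
    have hcount : (⋃ t ∈ T, {z : 𝕀 | (z, x) ∉ t}).Countable := by
      refine hc.biUnion fun t ht => (alex_open_finite x t (hT t ht) ?_).countable
      have : (x, x) ∈ ⋂₀ T := by rw [← hE]; rfl
      exact this t ht
    have huniv : (univ : Set 𝕀).Countable := by
      refine (hcount.union (countable_singleton x)).mono fun z _ => ?_
      by_contra h
      simp only [mem_union, mem_iUnion, mem_ofPred_eq, mem_singleton_iff, not_or, not_exists,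
        not_not] at h
      have : (z, x) ∈ ({(x, x)} : Set (𝕀 × 𝕀)) := by
        rw [hE]; exact fun t ht => h.1 t ht
      exact h.2 (congrArg Prod.fst this)
    have h2 : (Icc (0:ℝ) 1).Countable := by
      have := huniv.image (Subtype.val : 𝕀 → ℝ)
      rwa [image_univ, Subtype.range_coe] at this
    have h3 := Cardinal.mk_Icc_real (zero_lt_one : (0:ℝ) < 1)
    have h4 := h2.le_aleph0
    rw [h3] at h4
    exact absurd h4 (not_le.2 Cardinal.aleph0_lt_continuum)
  · intro hd
    have ho : IsOpen (({x} : Set 𝕀) ×ˢ ({x}ᶜ : Set 𝕀)) := by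
      apply TopologicalSpace.isOpen_generateFrom_of_mem
      left
      exact ⟨x, {x}ᶜ, isOpen_compl_singleton, by simp, rfl⟩
    have hg : IsGδ ((Prod.snd : 𝕀 × 𝕀 → 𝕀) ⁻¹' {y}) :=
      (IsGδ.singleton y).preimage alex_snd_cont
    convert ho.isGδ.inter hg using 1
    ext ⟨a, b⟩
    have hd' : x ≠ y := hd
    simp only [mem_singleton_iff, Prod.mk.injEq, mem_inter_iff, mem_prod, mem_compl_iff,
      mem_preimage]
    constructor
    · rintro ⟨rfl, rfl⟩; exact ⟨⟨rfl, hd'.symm⟩, rfl⟩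
    · rintro ⟨⟨rfl, _⟩, rfl⟩; exact ⟨rfl, rfl⟩

theorem alex_mem_diag (𝔞 : @Homeomorph (𝕀 × 𝕀) (𝕀 × 𝕀) alexTop alexTop) (p : 𝕀 × 𝕀)
    (h : 𝔞 p ∉ diag) : p ∉ diag := by
  let _ := alexTop
  rw [← alex_gdelta_iff] at h ⊢
  have := h.preimage 𝔞.continuous
  convert this
  ext q
  simp

/-- Every self-homeomorphism of the Alexandroff square maps the diagonal onto the
diagonal and the set `{P₁, P₃}` onto `{P₁, P₃}`. -/
theorem alexandroff_homeomorph_maps_diag_and_corners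
    (𝔞 : @Homeomorph (𝕀 × 𝕀) (𝕀 × 𝕀) alexTop alexTop) :
    ⇑𝔞 '' diag = diag ∧ ⇑𝔞 '' {P₁, P₃} = {P₁, P₃} := by
  have h1 : ∀ p ∈ diag, 𝔞 p ∈ diag := fun p hp => by
    by_contra h
    exact alex_mem_diag 𝔞 p h hp
  have h2 : ∀ p ∈ diag, ∃ q ∈ diag, 𝔞 q = p := fun p hp => by
    refine ⟨(@Homeomorph.symm _ _ alexTop alexTop 𝔞) p, ?_,
      @Homeomorph.apply_symm_apply _ _ alexTop alexTop 𝔞 p⟩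
    by_contra h
    exact alex_mem_diag (@Homeomorph.symm _ _ alexTop alexTop 𝔞) p h hp
  refine ⟨?_, ?_⟩
  · ext p
    constructor
    · rintro ⟨q, hq, rfl⟩; exact h1 q hq
    · exact h2 p
  · let f : 𝕀 → 𝕀 := fun t => (𝔞 (t, t)).2
    have hf : ∀ t, 𝔞 (t, t) = (f t, f t) := fun t => Prod.ext (h1 (t, t) rfl) rfl
    have hc : Continuous f := by
      have := @Continuous.comp _ _ _ _ alexTop _ _ _ alex_snd_cont
        (@Continuous.comp _ _ _ _ alexTop alexTop _ _
          (@Homeomorph.continuous _ _ alexTop alexTop 𝔞) alex_diag_cont)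
      exact this
    have hinj : Function.Injective f := fun s t hst => by
      have : 𝔞 (s, s) = 𝔞 (t, t) := by rw [hf, hf, hst]
      exact congrArg Prod.fst (@Homeomorph.injective _ _ alexTop alexTop 𝔞 _ _ this)
    have hsurj : Function.Surjective f := fun t => by
      obtain ⟨⟨a, b⟩, hq, he⟩ := h2 (t, t) rfl
      have : a = b := hq
      subst this
      exact ⟨a, congrArg Prod.snd he⟩
    obtain ⟨u, hu⟩ := hsurj 0
    obtain ⟨v, hv⟩ := hsurj 1
    rw [image_pair, P₁, P₃, hf, hf]
    rcases hc.strictMono_of_inj hinj with hm | hm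
    · have a0 : f 0 ≤ f u := hm.monotone unitInterval.nonneg'
      have a1 : f v ≤ f 1 := hm.monotone unitInterval.le_one'
      rw [hu] at a0
      rw [hv] at a1
      have e0 : f 0 = 0 := le_antisymm a0 unitInterval.nonneg'
      have e1 : f 1 = 1 := le_antisymm unitInterval.le_one' a1
      rw [e0, e1]
    · have a0 : f v ≤ f 0 := hm.antitone unitInterval.nonneg'
      have a1 : f 1 ≤ f u := hm.antitone unitInterval.le_one'
      rw [hv] at a0
      rw [hu] at a1
      have e0 : f 0 = 1 := le_antisymm unitInterval.le_one' a0
      have e1 : f 1 = 0 := le_antisymm a1 unitInterval.nonneg'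
      rw [e0, e1, pair_comm]
end

section
/- Every homeomorphism 𝔞 : 𝔸 → 𝔸 of the Alexandroff square maps the set L₂ ∪ L₄ ∪ {P₂, P₄} onto itself. -/
open Set

/-- The unit interval `[0,1]` with its Euclidean (subspace) topology. -/
local notation "𝕀" => unitInterval

def P₂ : 𝕀 × 𝕀 := (0, 1)
def P₄ : 𝕀 × 𝕀 := (1, 0)
def L₂ : Set (𝕀 × 𝕀) := (Ioo (0 : 𝕀) 1) ×ˢ ({1} : Set 𝕀)
def L₄ : Set (𝕀 × 𝕀) := (Ioo (0 : 𝕀) 1) ×ˢ ({0} : Set 𝕀)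

theorem alex_vert_continuous (t : 𝕀) :
    @Continuous 𝕀 (𝕀 × 𝕀) _ alexTop (fun y => (t, y)) := by
  refine continuous_generateFrom_iff.2 ?_
  rintro S (⟨x, U, hU, hx, rfl⟩ | ⟨U, F, hU, hF, rfl⟩)
  · by_cases h : t = x
    · convert hU using 1
      ext y; simp [h]
    · convert isOpen_empty using 1
      ext y; simp [h]
  · by_cases h : t ∈ F
    · convert isOpen_empty using 1
      ext y; simp [h]
    · convert hU using 1
      ext y; simp [h]

theorem alex_diag_continuous :
    @Continuous 𝕀 (𝕀 × 𝕀) _ alexTop (fun y => (y, y)) := by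
  refine continuous_generateFrom_iff.2 ?_
  rintro S (⟨x, U, hU, hx, rfl⟩ | ⟨U, F, hU, hF, rfl⟩)
  · convert isOpen_empty using 1
    ext y
    simp only [mem_preimage, mem_prod, mem_singleton_iff, mem_empty_iff_false, iff_false]
    rintro ⟨rfl, h⟩
    exact hx h
  · convert hU.sdiff hF.isClosed using 1
    ext y; simp

theorem alex_preconnected (p : 𝕀 × 𝕀)
    (hp : (p.2 = 1 ∧ p.1 < 1) ∨ (p.2 = 0 ∧ 0 < p.1)) :
    @IsPreconnected (𝕀 × 𝕀) alexTop {p}ᶜ := by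
  letI : TopologicalSpace (𝕀 × 𝕀) := alexTop
  have hne : p.1 ≠ p.2 := by
    rcases hp with ⟨h, h'⟩ | ⟨h, h'⟩
    · rw [h]; exact h'.ne
    · rw [h]; exact h'.ne'
  have hD : IsPreconnected (range (fun y : 𝕀 => (y, y))) :=
    isPreconnected_range alex_diag_continuous
  refine isPreconnected_of_forall (p.1, p.1) ?_
  rintro ⟨t, s⟩ hts
  have hV : IsPreconnected ((fun y : 𝕀 => (t, y)) '' uIcc t s) :=
    isPreconnected_uIcc.image _ (alex_vert_continuous t).continuousOn
  refine ⟨range (fun y : 𝕀 => (y, y)) ∪ (fun y : 𝕀 => (t, y)) '' uIcc t s, ?_,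
    Or.inl ⟨p.1, rfl⟩, Or.inr ⟨s, right_mem_uIcc, rfl⟩,
    hD.union (t, t) ⟨t, rfl⟩ ⟨t, left_mem_uIcc, rfl⟩ hV⟩
  rintro q (⟨y, rfl⟩ | ⟨y, hy, rfl⟩) hq
  · obtain rfl : (y, y) = p := hq
    exact hne rfl
  · obtain rfl : (t, y) = p := hq
    have hs : s ≠ y := fun h => hts (by simp [h])
    rw [mem_uIcc] at hy
    rcases hp with ⟨h, h'⟩ | ⟨h, h'⟩
    · simp only at h h'
      subst h
      rcases hy with hy | hy
      · exact hs (le_antisymm unitInterval.le_one' hy.2)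
      · exact absurd hy.2 (not_le.2 h')
    · simp only at h h'
      subst h
      rcases hy with hy | hy
      · exact absurd hy.1 (not_le.2 h')
      · exact hs (le_antisymm hy.1 unitInterval.nonneg')

theorem alex_open_strip (U : Set 𝕀) (hU : IsOpen U) :
    @IsOpen (𝕀 × 𝕀) alexTop (univ ×ˢ U) := by
  refine TopologicalSpace.isOpen_generateFrom_of_mem (Or.inr ⟨U, ∅, hU, finite_empty, ?_⟩)
  simp

theorem alex_open_off (x : 𝕀) :
    @IsOpen (𝕀 × 𝕀) alexTop ({x}ᶜ ×ˢ univ) := by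
  refine TopologicalSpace.isOpen_generateFrom_of_mem
    (Or.inr ⟨univ, {x}, isOpen_univ, finite_singleton x, ?_⟩)
  ext ⟨a, b⟩; simp

theorem alex_open_vert (x : 𝕀) (U : Set 𝕀) (hU : IsOpen U) (hx : x ∉ U) :
    @IsOpen (𝕀 × 𝕀) alexTop ({x} ×ˢ U) :=
  TopologicalSpace.isOpen_generateFrom_of_mem (Or.inl ⟨x, U, hU, hx, rfl⟩)

/-- If `U, U'` are the two sides of `y`, `x` is not in the nonempty side `U`, then `(x,y)` cuts. -/
theorem alex_cut (x y : 𝕀) (U U' : Set 𝕀) (hU : IsOpen U) (hU' : IsOpen U') (hx : x ∉ U)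
    (hne : U.Nonempty) (hUU : U ∪ U' = {y}ᶜ) (hd : Disjoint U U') :
    ¬ @IsPreconnected (𝕀 × 𝕀) alexTop {(x, y)}ᶜ := by
  letI : TopologicalSpace (𝕀 × 𝕀) := alexTop
  intro h
  have hmem : ∀ b, b ≠ y ↔ b ∈ U ∨ b ∈ U' := fun b => by
    have := Set.ext_iff.1 hUU b
    simpa using this.symm
  have key := h ({x} ×ˢ U) (univ ×ˢ U' ∪ {x}ᶜ ×ˢ univ) (alex_open_vert x U hU hx)
    (IsOpen.union (alex_open_strip U' hU') (alex_open_off x)) ?_ ?_ ?_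
  · obtain ⟨⟨a, b⟩, -, ⟨h1, h2⟩, h3⟩ := key
    rcases h3 with h3 | h3
    · exact Set.disjoint_left.1 hd h2 h3.2
    · exact h3.1 h1
  · rintro ⟨a, b⟩ hab
    by_cases hax : a = x
    · subst hax
      have hb : b ≠ y := fun h => hab (by simp [h])
      rcases (hmem b).1 hb with h | h
      · exact Or.inl ⟨rfl, h⟩
      · exact Or.inr (Or.inl ⟨trivial, h⟩)
    · exact Or.inr (Or.inr ⟨hax, trivial⟩)
  · obtain ⟨u, hu⟩ := hne
    refine ⟨(x, u), ?_, rfl, hu⟩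
    intro h
    exact (hmem u).2 (Or.inl hu) (congrArg Prod.snd h)
  · obtain ⟨a, ha⟩ := exists_ne x
    refine ⟨(a, y), ?_, Or.inr ⟨ha, trivial⟩⟩
    intro h
    exact ha (congrArg Prod.fst h)

theorem alex_mem_iff (p : 𝕀 × 𝕀) : p ∈ L₂ ∪ L₄ ∪ {P₂, P₄} ↔
    (p.2 = 1 ∧ p.1 < 1) ∨ (p.2 = 0 ∧ 0 < p.1) := by
  obtain ⟨x, y⟩ := p
  simp only [L₂, L₄, P₂, P₄, mem_union, mem_prod, mem_Ioo, mem_singleton_iff, mem_insert_iff,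
    Prod.mk.injEq]
  have h0 : x = 0 ∨ 0 < x := by
    rcases (unitInterval.nonneg' (t := x)).eq_or_lt with h | h
    · exact Or.inl h.symm
    · exact Or.inr h
  have h1 : x = 1 ∨ x < 1 := (unitInterval.le_one' (t := x)).eq_or_lt
  have h01 : (0 : 𝕀) < 1 := zero_lt_one
  constructor
  · rintro ((h | h) | h | h)
    · exact Or.inl ⟨h.2, h.1.2⟩
    · exact Or.inr ⟨h.2, h.1.1⟩
    · exact Or.inl ⟨h.2, h.1 ▸ h01⟩
    · exact Or.inr ⟨h.2, h.1 ▸ h01⟩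
  · rintro (h | h)
    · rcases h0 with h0 | h0
      · exact Or.inr (Or.inl ⟨h0, h.1⟩)
      · exact Or.inl (Or.inl ⟨⟨h0, h.2⟩, h.1⟩)
    · rcases h1 with h1 | h1
      · exact Or.inr (Or.inr ⟨h1, h.1⟩)
      · exact Or.inl (Or.inr ⟨⟨h.2, h1⟩, h.1⟩)

theorem alex_mem_iff_preconnected (p : 𝕀 × 𝕀) : p ∈ L₂ ∪ L₄ ∪ {P₂, P₄} ↔
    @IsPreconnected (𝕀 × 𝕀) alexTop {p}ᶜ := by
  rw [alex_mem_iff]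
  refine ⟨alex_preconnected p, fun h => ?_⟩
  obtain ⟨x, y⟩ := p
  have up : x ≤ y → y = 1 := fun hxy => by
    by_contra hy
    refine alex_cut x y (Ioi y) (Iio y) isOpen_Ioi isOpen_Iio (not_lt.2 hxy)
      ⟨1, lt_of_le_of_ne unitInterval.le_one' hy⟩ Ioi_union_Iio ?_ h
    exact Set.disjoint_left.2 fun a h1 h2 => by
      simp only [mem_Ioi, mem_Iio] at h1 h2
      exact lt_asymm h1 h2
  have down : y ≤ x → y = 0 := fun hxy => by
    by_contra hy
    refine alex_cut x y (Iio y) (Ioi y) isOpen_Iio isOpen_Ioi (not_lt.2 hxy)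
      ⟨0, lt_of_le_of_ne unitInterval.nonneg' (Ne.symm hy)⟩ Iio_union_Ioi ?_ h
    exact Set.disjoint_left.2 fun a h1 h2 => by
      simp only [mem_Ioi, mem_Iio] at h1 h2
      exact lt_asymm h1 h2
  rcases lt_trichotomy x y with hxy | hxy | hxy
  · have := up hxy.le
    exact Or.inl ⟨this, lt_of_lt_of_eq hxy this⟩
  · exact absurd ((down hxy.ge).symm.trans (up hxy.le)) zero_ne_one
  · have := down hxy.le
    exact Or.inr ⟨this, lt_of_eq_of_lt this.symm hxy⟩

/-- Every self-homeomorphism of the Alexandroff square maps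
`L₂ ∪ L₄ ∪ {P₂, P₄}` onto itself. -/
theorem alexandroff_homeomorph_maps_horizontal_boundary
    (𝔞 : @Homeomorph (𝕀 × 𝕀) (𝕀 × 𝕀) alexTop alexTop) :
    ⇑𝔞 '' (L₂ ∪ L₄ ∪ {P₂, P₄}) = L₂ ∪ L₄ ∪ {P₂, P₄} := by
  letI : TopologicalSpace (𝕀 × 𝕀) := alexTop
  have key : ∀ p, p ∈ L₂ ∪ L₄ ∪ {P₂, P₄} ↔ 𝔞 p ∈ L₂ ∪ L₄ ∪ {P₂, P₄} := by
    intro p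
    rw [alex_mem_iff_preconnected, alex_mem_iff_preconnected, ← image_singleton,
      ← image_compl_eq 𝔞.bijective]
    exact (Homeomorph.isPreconnected_image 𝔞).symm
  ext q
  constructor
  · rintro ⟨p, hp, rfl⟩
    exact (key p).1 hp
  · intro hq
    obtain ⟨p, rfl⟩ := 𝔞.surjective q
    exact ⟨p, (key p).2 hq, rfl⟩
end

section
/- For every homeomorphism 𝔞 : 𝔸 → 𝔸 of the Alexandroff square and every s ∈ I, there exists t ∈ I such that 𝔞({s} × I) = {t} × I and 𝔞({(s,0), (s,1)}) = {(t,0), (t,1)}. -/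
open Set

/-- The unit interval `[0,1]` with its Euclidean (subspace) topology. -/
local notation "𝕀" => unitInterval

/-- The Alexandroff square as a type synonym carrying its own topology. -/
def AlexSq : Type := 𝕀 × 𝕀

instance instTopAlexSq : TopologicalSpace AlexSq := alexTop

/-- The inclusion of the vertical fiber over `x`. -/
def alexIncl (x y : 𝕀) : AlexSq := ((x, y) : 𝕀 × 𝕀)

/-- First coordinate. -/
def alexFst (p : AlexSq) : 𝕀 := Prod.fst (α := 𝕀) (β := 𝕀) p

/-- Second coordinate. -/
def alexSnd (p : AlexSq) : 𝕀 := Prod.snd (α := 𝕀) (β := 𝕀) p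

theorem alex_ext {p q : AlexSq} (h1 : alexFst p = alexFst q) (h2 : alexSnd p = alexSnd q) :
    p = q := Prod.ext (α := 𝕀) (β := 𝕀) h1 h2

theorem alex_open_vert_s2 (x : 𝕀) (U : Set 𝕀) (hU : IsOpen U) (hx : x ∉ U) :
    IsOpen {p : AlexSq | alexFst p = x ∧ alexSnd p ∈ U} := by
  apply TopologicalSpace.isOpen_generateFrom_of_mem
  left
  refine ⟨x, U, hU, hx, ?_⟩
  ext p
  rfl

theorem alex_open_horiz (U F : Set 𝕀) (hU : IsOpen U) (hF : F.Finite) :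
    IsOpen {p : AlexSq | alexSnd p ∈ U ∧ alexFst p ∉ F} := by
  apply TopologicalSpace.isOpen_generateFrom_of_mem
  right
  refine ⟨U, F, hU, hF, ?_⟩
  ext p
  exact ⟨fun h => ⟨⟨trivial, h.1⟩, fun h' => h.2 h'.1⟩, fun h => ⟨h.1.2, fun h' => h.2 ⟨h', trivial⟩⟩⟩

theorem alex_continuous_snd : Continuous alexSnd := by
  refine continuous_def.2 fun U hU => ?_
  have := alex_open_horiz U ∅ hU finite_empty
  simpa [preimage] using this

theorem alex_fiber_compl_open (t : 𝕀) : IsOpen {p : AlexSq | alexFst p ≠ t} := by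
  have := alex_open_horiz univ {t} isOpen_univ (finite_singleton t)
  simpa using this

theorem alex_continuous_incl (x : 𝕀) : Continuous (alexIncl x) := by
  refine continuous_generateFrom_iff.2 ?_
  rintro S (⟨x', U, hU, -, rfl⟩ | ⟨U, F, hU, hF, rfl⟩)
  · by_cases h : x = x'
    · convert hU using 1
      ext y
      exact ⟨fun hy => hy.2, fun hy => ⟨h, hy⟩⟩
    · convert isOpen_empty using 1
      ext y
      exact ⟨fun hy => h hy.1, fun hy => hy.elim⟩
  · by_cases h : x ∈ F
    · convert isOpen_empty using 1
      ext y
      exact ⟨fun hy => hy.2 ⟨h, trivial⟩, fun hy => hy.elim⟩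
    · convert hU using 1
      ext y
      exact ⟨fun hy => hy.1.2, fun hy => ⟨⟨trivial, hy⟩, fun h' => h h'.1⟩⟩

theorem alex_nhds_offdiag (p : AlexSq) (h : alexFst p ≠ alexSnd p) :
    (nhds p).IsCountablyGenerated := by
  have : nhds p = Filter.map (alexIncl (alexFst p)) (nhds (alexSnd p)) := by
    apply le_antisymm
    · intro V hV
      obtain ⟨U, hUV, hU, hyU⟩ := mem_nhds_iff.1 (Filter.mem_map.1 hV)
      refine mem_nhds_iff.2 ⟨_, ?_, alex_open_vert_s2 (alexFst p) (U ∩ {alexFst p}ᶜ)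
        (hU.inter isOpen_compl_singleton) (by simp), ?_⟩
      · rintro q ⟨hq1, hq2, -⟩
        have := hUV hq2
        have e : alexIncl (alexFst p) (alexSnd q) = q := by rw [← hq1]; rfl
        rwa [mem_preimage, e] at this
      · exact ⟨rfl, hyU, fun h' => h h'.symm⟩
    · exact (alex_continuous_incl (alexFst p)).tendsto (alexSnd p)
  rw [this]
  infer_instance

theorem alex_mem_nhds_diag (x : 𝕀) (V : Set AlexSq) (hV : V ∈ nhds (alexIncl x x)) :
    ∃ F : Set 𝕀, F.Finite ∧ ∀ z, z ∉ F → alexIncl z x ∈ V := by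
  have e : nhds (alexIncl x x) =
      ⨅ s ∈ {s : Set AlexSq | alexIncl x x ∈ s ∧ s ∈ alexBasis}, Filter.principal s :=
    TopologicalSpace.nhds_generateFrom (g := alexBasis)
  rw [e] at hV
  let G : Filter 𝕀 := Filter.cofinite
  have key : Filter.map (fun z => alexIncl z x) G ≤
      ⨅ s ∈ {s : Set AlexSq | alexIncl x x ∈ s ∧ s ∈ alexBasis}, Filter.principal s := by
    refine le_iInf₂ ?_
    rintro S ⟨hS, (⟨x', U, hU, hx, rfl⟩ | ⟨U, F, hU, hF, rfl⟩)⟩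
    · obtain ⟨h1, h2⟩ := hS
      exact absurd (show x' ∈ U from (show x = x' from h1) ▸ h2) hx
    · refine Filter.le_principal_iff.2 (Filter.mem_map.2 (Filter.mem_cofinite.2 (hF.subset ?_)))
      intro z hz
      by_contra hzF
      exact hz ⟨⟨trivial, hS.1.2⟩, fun h => hzF h.1⟩
  have := key hV
  rw [Filter.mem_map, Filter.mem_cofinite] at this
  exact ⟨_, this, fun z hz => by simpa using hz⟩

theorem alex_nhds_diag (p : AlexSq) (h : alexFst p = alexSnd p) :
    ¬ (nhds p).IsCountablyGenerated := by
  intro hc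
  obtain ⟨x, rfl⟩ : ∃ x, p = alexIncl x x := ⟨alexFst p, alex_ext rfl h.symm⟩
  obtain ⟨V, hV⟩ := (nhds (alexIncl x x)).exists_antitone_basis
  choose F hF hFV using fun n => alex_mem_nhds_diag x (V n) (hV.1.mem_of_mem (i := n) trivial)
  have hcount : ((⋃ n, F n) ∪ {x}).Countable :=
    (countable_iUnion fun n => (hF n).countable).union (countable_singleton x)
  have hunc : ¬ (univ : Set 𝕀).Countable := by
    intro hu
    have h2 : (Icc (0 : ℝ) 1).Countable := by
      have := hu.image (Subtype.val)
      rwa [image_univ, Subtype.range_coe] at this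
    exact (Cardinal.Real.Icc_countable_iff.1 h2).not_gt zero_lt_one
  obtain ⟨z, hz⟩ : ∃ z, z ∉ (⋃ n, F n) ∪ {x} := by
    by_contra! hall
    exact hunc (hcount.mono fun z _ => hall z)
  simp only [mem_union, mem_iUnion, mem_singleton_iff, not_or, not_exists] at hz
  have hn : {p : AlexSq | alexFst p ≠ z} ∈ nhds (alexIncl x x) :=
    (alex_fiber_compl_open z).mem_nhds (fun h => hz.2 h.symm)
  obtain ⟨n, -, hn⟩ := hV.1.mem_iff.1 hn
  exact hn (hFV n z (hz.1 n)) rfl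

theorem alex_diag_iff (a : AlexSq ≃ₜ AlexSq) (p : AlexSq) :
    alexFst (a p) = alexSnd (a p) ↔ alexFst p = alexSnd p := by
  have h : ∀ q : AlexSq, alexFst q = alexSnd q ↔ ¬ (nhds q).IsCountablyGenerated := fun q =>
    ⟨alex_nhds_diag q, fun h => by_contra fun h' => h (alex_nhds_offdiag q h')⟩
  rw [h, h, not_iff_not]
  constructor
  · intro h1
    rw [a.nhds_eq_comap]
    infer_instance
  · intro h1
    rw [← a.map_nhds_eq]
    infer_instance

theorem alex_fst_const (a : AlexSq ≃ₜ AlexSq) (s y : 𝕀) :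
    alexFst (a (alexIncl s y)) = alexFst (a (alexIncl s s)) := by
  have hf : Continuous fun y => a (alexIncl s y) := a.continuous.comp (alex_continuous_incl s)
  by_contra hne
  set t := alexFst (a (alexIncl s y)) with ht
  have hclosed : IsClosed {z | alexFst (a (alexIncl s z)) = t} := by
    have := (alex_fiber_compl_open t).preimage hf
    rw [← isOpen_compl_iff]
    exact this
  have hopen : IsOpen {z | alexFst (a (alexIncl s z)) = t} := by
    have := (alex_open_vert_s2 t {t}ᶜ isOpen_compl_singleton (by simp)).preimage hf
    convert this using 1
    ext z
    constructor
    · intro hz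
      refine ⟨hz, fun h => ?_⟩
      have hz' : alexFst (a (alexIncl s z)) = t := hz
      have h' : alexSnd (a (alexIncl s z)) = t := h
      have : s = z := (alex_diag_iff a (alexIncl s z)).1 (hz'.trans h'.symm)
      subst this
      exact hne hz'.symm
    · exact fun hz => hz.1
  have huniv := IsClopen.eq_univ ⟨hclosed, hopen⟩ ⟨y, ht.symm⟩
  have : s ∈ {z | alexFst (a (alexIncl s z)) = t} := huniv ▸ mem_univ s
  exact hne this.symm

theorem alex_endpoints (g : 𝕀 → 𝕀) (hg : Continuous g) (hb : Function.Bijective g) :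
    (g 0 = 0 ∧ g 1 = 1) ∨ (g 0 = 1 ∧ g 1 = 0) := by
  obtain ⟨u, hu⟩ := hb.2 0
  obtain ⟨v, hv⟩ := hb.2 1
  rcases hg.strictMono_of_inj hb.1 with h | h
  · left
    exact ⟨le_antisymm ((h.monotone unitInterval.nonneg').trans hu.le) unitInterval.nonneg',
      le_antisymm unitInterval.le_one' (hv.symm.le.trans (h.monotone unitInterval.le_one'))⟩
  · right
    exact ⟨le_antisymm unitInterval.le_one' (hv.symm.le.trans (h.antitone unitInterval.nonneg')),
      le_antisymm ((h.antitone unitInterval.le_one').trans hu.le) unitInterval.nonneg'⟩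

theorem alex_main (a : AlexSq ≃ₜ AlexSq) (s : 𝕀) :
    ∃ (t : 𝕀) (g : 𝕀 → 𝕀), Continuous g ∧ Function.Bijective g ∧
      ∀ y, a (alexIncl s y) = alexIncl t (g y) := by
  set t := alexFst (a (alexIncl s s)) with ht
  have hfib : ∀ y, a (alexIncl s y) = alexIncl t (alexSnd (a (alexIncl s y))) := fun y =>
    alex_ext (alex_fst_const a s y) rfl
  refine ⟨t, fun y => alexSnd (a (alexIncl s y)),
    alex_continuous_snd.comp (a.continuous.comp (alex_continuous_incl s)), ⟨?_, ?_⟩, hfib⟩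
  · intro y z hyz
    have : a (alexIncl s y) = a (alexIncl s z) := by
      rw [hfib y, hfib z]
      exact congrArg _ hyz
    exact congrArg alexSnd (a.injective this)
  · intro w
    have h1 := alex_fst_const a.symm t w
    have h2 : a (alexIncl s s) = alexIncl t t :=
      alex_ext rfl ((alex_diag_iff a (alexIncl s s)).2 rfl).symm
    rw [← h2, a.symm_apply_apply] at h1
    refine ⟨alexSnd (a.symm (alexIncl t w)), ?_⟩
    have h3 : alexIncl s (alexSnd (a.symm (alexIncl t w))) = a.symm (alexIncl t w) :=
      alex_ext h1.symm rfl
    simp only [h3, a.apply_symm_apply]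
    rfl

/-- For every self-homeomorphism `𝔞` of the Alexandroff square and every `s ∈ [0,1]`
there is `t ∈ [0,1]` with `𝔞({s} × [0,1]) = {t} × [0,1]` and
`𝔞({(s,0),(s,1)}) = {(t,0),(t,1)}`. -/
theorem alexandroff_homeomorph_maps_fibers_to_fibers
    (𝔞 : @Homeomorph (𝕀 × 𝕀) (𝕀 × 𝕀) alexTop alexTop) (s : 𝕀) :
    ∃ t : 𝕀, ⇑𝔞 '' (({s} : Set 𝕀) ×ˢ (univ : Set 𝕀)) = ({t} : Set 𝕀) ×ˢ (univ : Set 𝕀) ∧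
      ⇑𝔞 '' {((s, 0) : 𝕀 × 𝕀), (s, 1)} = {((t, 0) : 𝕀 × 𝕀), (t, 1)} := by
  obtain ⟨t, g, hg, hb, h⟩ := alex_main 𝔞 s
  have h' : ∀ y : 𝕀, 𝔞 (s, y) = (t, g y) := h
  refine ⟨t, ?_, ?_⟩
  · ext ⟨x, w⟩
    constructor
    · rintro ⟨⟨s', y⟩, ⟨hs, -⟩, he⟩
      obtain rfl : s' = s := hs
      rw [h' y] at he
      exact ⟨(congrArg Prod.fst he).symm, trivial⟩
    · rintro ⟨hx, -⟩
      obtain rfl : x = t := hx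
      obtain ⟨y, rfl⟩ := hb.2 w
      exact ⟨(s, y), ⟨rfl, trivial⟩, h' y⟩
  · rw [image_pair, h' 0, h' 1]
    rcases alex_endpoints g hg hb with ⟨h0, h1⟩ | ⟨h0, h1⟩
    · rw [h0, h1]
    · rw [h0, h1, pair_comm]
end

section
/- For every homeomorphism 𝔞 : 𝔸 → 𝔸 of the Alexandroff square, exactly one of the following holds: (a) 𝔞(Pᵢ) = Pᵢ for i = 1,2,3,4, 𝔞(L₁) = L₁ and 𝔞(L₃) = L₃; or (b) 𝔞(P₁) = P₃, 𝔞(P₂) = P₄, 𝔞(P₃) = P₁, 𝔞(P₄) = P₂, 𝔞(L₁) = L₃ and 𝔞(L₃) = L₁. -/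
open Set

/-- The unit interval `[0,1]` with its Euclidean (subspace) topology. -/
local notation "𝕀" => unitInterval

def L₁ : Set (𝕀 × 𝕀) := ({0} : Set 𝕀) ×ˢ Ioo (0 : 𝕀) 1
def L₃ : Set (𝕀 × 𝕀) := ({1} : Set 𝕀) ×ˢ Ioo (0 : 𝕀) 1

/-- Type synonym carrying the Alexandroff topology. -/
def ASq : Type := 𝕀 × 𝕀

instance instTopASq : TopologicalSpace ASq := alexTop

def ASq.mk (x y : 𝕀) : ASq := (x, y)
def ASq.fst (p : ASq) : 𝕀 := Prod.fst p
def ASq.snd (p : ASq) : 𝕀 := Prod.snd p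

namespace ASq

lemma mk_fst (x y : 𝕀) : (mk x y).fst = x := rfl
lemma mk_snd (x y : 𝕀) : (mk x y).snd = y := rfl
lemma eq_mk (p : ASq) : p = mk p.fst p.snd := rfl
lemma ext' {p q : ASq} (h1 : p.fst = q.fst) (h2 : p.snd = q.snd) : p = q := by
  rw [eq_mk p, eq_mk q, h1, h2]

lemma isOpen_line (x : 𝕀) (U : Set 𝕀) (hU : IsOpen U) (hx : x ∉ U) :
    IsOpen {p : ASq | p.fst = x ∧ p.snd ∈ U} := by
  apply TopologicalSpace.isOpen_generateFrom_of_mem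
  left
  refine ⟨x, U, hU, hx, ?_⟩
  ext p
  exact Iff.rfl

lemma isOpen_box (U F : Set 𝕀) (hU : IsOpen U) (hF : F.Finite) :
    IsOpen {p : ASq | p.snd ∈ U ∧ p.fst ∉ F} := by
  apply TopologicalSpace.isOpen_generateFrom_of_mem
  right
  refine ⟨U, F, hU, hF, ?_⟩
  ext p
  exact ⟨fun h => ⟨⟨trivial, h.1⟩, fun h' => h.2 h'.1⟩,
    fun h => ⟨h.1.2, fun h' => h.2 ⟨h', trivial⟩⟩⟩

lemma continuous_snd : Continuous ASq.snd := by
  refine ⟨fun U hU => ?_⟩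
  have := isOpen_box U ∅ hU Set.finite_empty
  convert this using 1
  ext p
  exact ⟨fun h => ⟨h, fun h' => h'⟩, fun h => h.1⟩

lemma isClosed_line (x : 𝕀) : IsClosed {p : ASq | p.fst = x} := by
  rw [← isOpen_compl_iff]
  have := isOpen_box Set.univ {x} isOpen_univ (Set.finite_singleton x)
  simpa [Set.compl_def] using this

lemma continuous_mk (x : 𝕀) : Continuous (mk x) := by
  refine continuous_generateFrom_iff.2 ?_
  rintro S (⟨z, U, hU, hz, rfl⟩ | ⟨U, F, hU, hF, rfl⟩)
  · by_cases h : x = z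
    · subst h
      convert hU using 1
      ext t
      exact ⟨fun h => h.2, fun h => ⟨rfl, h⟩⟩
    · convert isOpen_empty using 1
      ext t
      exact ⟨fun h' => h h'.1, fun h => h.elim⟩
  · by_cases h : x ∈ F
    · convert isOpen_empty using 1
      ext t
      exact ⟨fun h' => h'.2 ⟨h, trivial⟩, fun h => h.elim⟩
    · convert hU using 1
      ext t
      exact ⟨fun h => h.1.2, fun h' => ⟨⟨trivial, h'⟩, fun h'' => h h''.1⟩⟩

lemma open_diag {S : Set ASq} (hS : IsOpen S) (x : 𝕀) (hx : mk x x ∈ S) :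
    {z | mk z x ∉ S}.Finite := by
  have hS' : TopologicalSpace.GenerateOpen alexBasis S := hS
  induction hS' with
  | basic S h =>
    rcases h with ⟨z, U, hU, hz, rfl⟩ | ⟨U, F, hU, hF, rfl⟩
    · exfalso
      obtain ⟨h1, h2⟩ := hx
      have h1' : x = z := h1
      subst h1'
      exact hz h2
    · refine hF.subset ?_
      intro z hz
      by_contra hzF
      exact hz ⟨⟨trivial, hx.1.2⟩, fun h => hzF h.1⟩
  | univ => simp
  | inter s t hs ht ihs iht =>
    refine ((ihs hs hx.1).union (iht ht hx.2)).subset ?_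
    intro z hz
    by_contra h
    simp only [Set.mem_union, Set.mem_ofPred_eq, not_or, not_not] at h
    exact hz ⟨h.1, h.2⟩
  | sUnion T hT ih =>
    obtain ⟨s, hs, hxs⟩ := hx
    refine (ih s hs (hT s hs) hxs).subset ?_
    intro z hz hzs
    exact hz ⟨s, hs, hzs⟩

lemma not_isGδ_diag (x : 𝕀) : ¬ IsGδ ({mk x x} : Set ASq) := by
  rintro ⟨T, hT, hTc, hTe⟩
  have hmem : ∀ S ∈ T, mk x x ∈ S := by
    intro S hS
    have : mk x x ∈ ⋂₀ T := hTe ▸ Set.mem_singleton _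
    exact this S hS
  have hc : (⋃ S ∈ T, {z | mk z x ∉ S}).Countable :=
    hTc.biUnion fun S hS => (open_diag (hT S hS) x (hmem S hS)).countable
  have hc2 : (Set.univ : Set 𝕀).Countable := by
    refine (hc.union (Set.countable_singleton x)).mono ?_
    intro z _
    by_contra h
    simp only [Set.mem_union, Set.mem_iUnion, Set.mem_ofPred_eq, not_or, not_exists, not_not,
      Set.mem_singleton_iff] at h
    have : mk z x ∈ ⋂₀ T := fun S hS => h.1 S hS
    rw [← hTe] at this
    exact h.2 (congrArg ASq.fst this)
  have hc3 : (Set.Icc (0:ℝ) 1).Countable := by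
    have := hc2.image (Subtype.val : 𝕀 → ℝ)
    rwa [Set.image_univ, Subtype.range_coe] at this
  have := Cardinal.mk_Icc_real (zero_lt_one' ℝ)
  have h4 := hc3.le_aleph0
  rw [this] at h4
  exact absurd h4 (not_le.2 Cardinal.aleph0_lt_continuum)

lemma isGδ_off (x y : 𝕀) (h : x ≠ y) : IsGδ ({mk x y} : Set ASq) := by
  have e : ({mk x y} : Set ASq) = {p : ASq | p.fst = x ∧ p.snd ∈ ({x}ᶜ : Set 𝕀)} ∩
      ASq.snd ⁻¹' {y} := by
    ext p
    constructor
    · rintro rfl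
      exact ⟨⟨rfl, fun h' => h h'.symm⟩, rfl⟩
    · rintro ⟨h1, h2⟩
      exact ext' h1.1 h2
  rw [e]
  exact (isOpen_line x _ isOpen_compl_singleton (by simp)).isGδ.inter
    ((IsGδ.singleton y).preimage continuous_snd)

lemma diag_iff (p : ASq) : p.fst = p.snd ↔ ¬ IsGδ ({p} : Set ASq) := by
  constructor
  · intro h
    rw [eq_mk p, h]
    exact not_isGδ_diag _
  · intro h
    by_contra h'
    exact h (isGδ_off _ _ h')

lemma map_diag_iff (h : ASq ≃ₜ ASq) (p : ASq) : (h p).fst = (h p).snd ↔ p.fst = p.snd := by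
  rw [diag_iff, diag_iff, not_iff_not]
  constructor
  · intro H
    have := H.preimage h.continuous
    convert this using 1
    ext q
    simp
  · intro H
    have := H.preimage h.symm.continuous
    convert this using 1
    ext q
    simp [Homeomorph.symm_apply_eq]

lemma line_const (h : ASq ≃ₜ ASq) (x y : 𝕀) : (h (mk x y)).fst = (h (mk x x)).fst := by
  rcases eq_or_ne x y with rfl | hne
  · rfl
  obtain ⟨S, hS, hyS, hxS, hxc⟩ : ∃ S : Set 𝕀, IsPreconnected S ∧ y ∈ S ∧ x ∉ S ∧
      x ∈ closure S := by
    rcases lt_or_gt_of_ne hne with hl | hl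
    · refine ⟨Set.Ioc x y, isPreconnected_Ioc, ⟨hl, le_rfl⟩, by simp, ?_⟩
      rw [closure_Ioc hl.ne]
      exact ⟨le_rfl, hl.le⟩
    · refine ⟨Set.Ico y x, isPreconnected_Ico, ⟨le_rfl, hl⟩, by simp, ?_⟩
      rw [closure_Ico hl.ne]
      exact ⟨hl.le, le_rfl⟩
  have hc : Continuous (fun t => h (mk x t)) := h.continuous.comp (continuous_mk x)
  set z := (h (mk x y)).fst with hz
  have hnd : ∀ t ∈ S, (h (mk x t)).fst ≠ (h (mk x t)).snd := by
    intro t ht he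
    have : x = t := (map_diag_iff h (mk x t)).1 he
    exact hxS (this ▸ ht)
  have hu := (isOpen_line z _ isOpen_compl_singleton (by simp : z ∉ ({z}ᶜ : Set 𝕀))).preimage hc
  have hv := (isClosed_line z).isOpen_compl.preimage hc
  have hsub := hS.subset_left_of_subset_union hu hv ?_ ?_ ?_
  · have hcl := (isClosed_line z).preimage hc
    have : closure S ⊆ _ := closure_minimal (fun t ht => (hsub ht).1) hcl
    exact (this hxc).symm
  · rw [Set.disjoint_left]
    intro t h1 h2
    exact h2 h1.1
  · intro t ht
    by_cases h1 : (h (mk x t)).fst = z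
    · left
      refine ⟨h1, fun h2 => hnd t ht ?_⟩
      rw [h1]
      exact (Set.mem_singleton_iff.1 h2).symm
    · right
      exact h1
  · refine ⟨y, hyS, rfl, fun h2 => hnd y hyS ?_⟩
    exact (Set.mem_singleton_iff.1 h2).symm

lemma bij_ends (f : 𝕀 → 𝕀) (hf : Continuous f) (hi : Function.Injective f)
    (hs : Function.Surjective f) : (f 0 = 0 ∧ f 1 = 1) ∨ (f 0 = 1 ∧ f 1 = 0) := by
  obtain ⟨a, ha⟩ := hs 0
  obtain ⟨b, hb⟩ := hs 1
  rcases hf.strictMono_of_inj hi with hm | hm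
  · left
    constructor
    · exact le_antisymm ((show f 0 ≤ f a from hm.monotone unitInterval.nonneg').trans_eq ha) unitInterval.nonneg'
    · exact le_antisymm unitInterval.le_one' (hb.symm.trans_le (show f b ≤ f 1 from hm.monotone unitInterval.le_one'))
  · right
    constructor
    · exact le_antisymm unitInterval.le_one' (hb.symm.trans_le (show f b ≤ f 0 from hm.antitone unitInterval.nonneg'))
    · exact le_antisymm ((show f 1 ≤ f a from hm.antitone unitInterval.le_one').trans_eq ha) unitInterval.nonneg'

lemma line_map (h : ASq ≃ₜ ASq) (x : 𝕀) : ∃ (z : 𝕀) (f : 𝕀 → 𝕀),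
    (∀ y, h (mk x y) = mk z (f y)) ∧ f x = z ∧ Function.Injective f ∧ Function.Surjective f ∧
    ((f 0 = 0 ∧ f 1 = 1) ∨ (f 0 = 1 ∧ f 1 = 0)) := by
  have hd : (h (mk x x)).fst = (h (mk x x)).snd := (map_diag_iff h _).2 rfl
  have he : ∀ y, h (mk x y) = mk (h (mk x x)).fst (h (mk x y)).snd :=
    fun y => ext' (line_const h x y) rfl
  have hi : Function.Injective fun y => (h (mk x y)).snd := by
    intro y y' hyy
    have : h (mk x y) = h (mk x y') := by
      rw [he y, he y']
      exact congrArg _ hyy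
    exact congrArg ASq.snd (h.injective this)
  have hs : Function.Surjective fun y => (h (mk x y)).snd := by
    intro w
    set z := (h (mk x x)).fst with hz
    have h1 := line_const h.symm z w
    have h2 : mk z z = h (mk x x) := ext' rfl hd
    rw [h2, h.symm_apply_apply, mk_fst] at h1
    refine ⟨(h.symm (mk z w)).snd, ?_⟩
    have h3 : mk x (h.symm (mk z w)).snd = h.symm (mk z w) := ext' h1.symm rfl
    simp only [h3, h.apply_symm_apply, mk_snd]
  exact ⟨_, _, he, hd.symm, hi, hs,
    bij_ends _ (continuous_snd.comp (h.continuous.comp (continuous_mk x))) hi hs⟩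

end ASq

lemma image_line (g : 𝕀 × 𝕀 → 𝕀 × 𝕀) (x z : 𝕀) (f : 𝕀 → 𝕀) (hg : ∀ y, g (x, y) = (z, f y))
    (hi : Function.Injective f) (hs : Function.Surjective f)
    (he : (f 0 = 0 ∧ f 1 = 1) ∨ (f 0 = 1 ∧ f 1 = 0)) :
    g '' (({x} : Set 𝕀) ×ˢ Ioo (0 : 𝕀) 1) = ({z} : Set 𝕀) ×ˢ Ioo (0 : 𝕀) 1 := by
  have key : ∀ t : 𝕀, t ∈ Ioo (0 : 𝕀) 1 ↔ t ≠ 0 ∧ t ≠ 1 := fun t =>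
    and_congr unitInterval.pos_iff_ne_zero unitInterval.lt_one_iff_ne_one
  have hk : ∀ t, f t ∈ Ioo (0 : 𝕀) 1 ↔ t ∈ Ioo (0 : 𝕀) 1 := by
    intro t
    rw [key, key]
    rcases he with ⟨h0, h1⟩ | ⟨h0, h1⟩
    · rw [← hi.ne_iff (x := t) (y := 0), ← hi.ne_iff (x := t) (y := 1), h0, h1]
    · rw [← hi.ne_iff (x := t) (y := 0), ← hi.ne_iff (x := t) (y := 1), h0, h1, and_comm]
  ext ⟨a, b⟩
  constructor
  · rintro ⟨⟨c, d⟩, ⟨hc, hd⟩, hcd⟩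
    have hc' : c = x := hc
    subst hc'
    rw [hg] at hcd
    rw [← hcd]
    exact ⟨rfl, (hk d).2 hd⟩
  · rintro ⟨ha, hb⟩
    obtain ⟨t, rfl⟩ := hs b
    have ha' : a = z := ha
    subst ha'
    exact ⟨(x, t), ⟨rfl, (hk t).1 hb⟩, hg t⟩

/-- For every self-homeomorphism of the Alexandroff square, exactly one of the following
holds: (a) it fixes each corner `Pᵢ` and maps `L₁` onto `L₁` and `L₃` onto `L₃`;
(b) it swaps `P₁ ↔ P₃`, `P₂ ↔ P₄`, and maps `L₁` onto `L₃` and `L₃` onto `L₁`. -/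
theorem alexandroff_homeomorph_corner_dichotomy
    (𝔞 : @Homeomorph (𝕀 × 𝕀) (𝕀 × 𝕀) alexTop alexTop) :
    Xor'
      (𝔞 P₁ = P₁ ∧ 𝔞 P₂ = P₂ ∧ 𝔞 P₃ = P₃ ∧ 𝔞 P₄ = P₄ ∧ ⇑𝔞 '' L₁ = L₁ ∧ ⇑𝔞 '' L₃ = L₃)
      (𝔞 P₁ = P₃ ∧ 𝔞 P₂ = P₄ ∧ 𝔞 P₃ = P₁ ∧ 𝔞 P₄ = P₂ ∧ ⇑𝔞 '' L₁ = L₃ ∧ ⇑𝔞 '' L₃ = L₁) := by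
  obtain ⟨z, f, hf, hfz, hfi, hfs, hfe⟩ := ASq.line_map 𝔞 0
  obtain ⟨w, k, hk, hkw, hki, hks, hke⟩ := ASq.line_map 𝔞 1
  have hf' : ∀ y, 𝔞 (0, y) = (z, f y) := hf
  have hk' : ∀ y, 𝔞 (1, y) = (w, k y) := hk
  have iL : ⇑𝔞 '' L₁ = ({z} : Set 𝕀) ×ˢ Ioo (0 : 𝕀) 1 := image_line _ 0 z f hf' hfi hfs hfe
  have iR : ⇑𝔞 '' L₃ = ({w} : Set 𝕀) ×ˢ Ioo (0 : 𝕀) 1 := image_line _ 1 w k hk' hki hks hke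
  have h01 : (0 : 𝕀) ≠ 1 := zero_ne_one
  have hzw : z ≠ w := by
    intro e
    have h1 : 𝔞 (0, 0) = 𝔞 (1, 1) := by rw [hf', hk', hfz, hkw, e]
    have h2 : ((0, 0) : 𝕀 × 𝕀) = (1, 1) := (@Homeomorph.toEquiv _ _ alexTop alexTop 𝔞).injective h1
    exact h01 (congrArg Prod.fst h2)
  rw [iL, iR]
  unfold P₁ P₂ P₃ P₄ L₁ L₃
  rw [hf', hf', hk', hk']
  rcases hfe with ⟨f0, f1⟩ | ⟨f0, f1⟩
  · rcases hke with ⟨k0, k1⟩ | ⟨k0, k1⟩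
    · have z0 : z = 0 := hfz.symm.trans f0
      have w0 : w = 1 := hkw.symm.trans k1
      subst z0 w0
      rw [f0, f1, k0, k1]
      exact Or.inl ⟨⟨rfl, rfl, rfl, rfl, rfl, rfl⟩, fun h => h01 (congrArg Prod.fst h.1)⟩
    · exact absurd ((hfz.symm.trans f0).trans (hkw.symm.trans k1).symm) hzw
  · rcases hke with ⟨k0, k1⟩ | ⟨k0, k1⟩
    · exact absurd ((hfz.symm.trans f0).trans (hkw.symm.trans k1).symm) hzw
    · have z0 : z = 1 := hfz.symm.trans f0
      have w0 : w = 0 := hkw.symm.trans k1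
      subst z0 w0
      rw [f0, f1, k0, k1]
      exact Or.inr ⟨⟨rfl, rfl, rfl, rfl, rfl, rfl⟩, fun h => h01 (congrArg Prod.fst h.1).symm⟩
end

section
/- Every homeomorphism 𝔬 : 𝕆 → 𝕆 of the lexicographically ordered square is either order preserving or order reversing with respect to the lexicographic order. -/
open Set

/-- The unit interval `[0,1]`. -/
local notation "𝕀" => unitInterval

/-- The lexicographic order on `[0,1] × [0,1]`:
`(x,y) ≤ (s,t)` iff `x < s`, or `x = s` and `y ≤ t`. -/
def lexLE (p q : 𝕀 × 𝕀) : Prop := p.1 < q.1 ∨ (p.1 = q.1 ∧ p.2 ≤ q.2)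

/-- The strict lexicographic order on `[0,1] × [0,1]`. -/
def lexLT (p q : 𝕀 × 𝕀) : Prop := p.1 < q.1 ∨ (p.1 = q.1 ∧ p.2 < q.2)

/-- The order topology of the lexicographic order on `[0,1] × [0,1]`, generated by the
open rays. -/
def lexTop : TopologicalSpace (𝕀 × 𝕀) :=
  TopologicalSpace.generateFrom
    ({S | ∃ a, S = {x | lexLT a x}} ∪ {S | ∃ a, S = {x | lexLT x a}})

/-- Existence of least upper bounds in the lexicographic square. -/
theorem lex_exists_isLUB (s : Set (𝕀 ×ₗ 𝕀)) : ∃ a, IsLUB s a := by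
  classical
  set a : 𝕀 := sSup ((fun p : 𝕀 ×ₗ 𝕀 => (ofLex p).1) '' s) with ha
  have hle : ∀ p ∈ s, (ofLex p).1 ≤ a := fun p hp => le_sSup ⟨p, hp, rfl⟩
  have hub : ∀ b ∈ upperBounds s, a ≤ (ofLex b).1 := by
    intro b hb
    apply sSup_le
    rintro _ ⟨p, hp, rfl⟩
    rcases Prod.Lex.le_iff.1 (hb hp) with h | h
    · exact h.le
    · exact h.1.le
  refine ⟨toLex (a, sSup {y : 𝕀 | toLex (a, y) ∈ s}), ?_, ?_⟩
  · intro p hp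
    rcases (hle p hp).lt_or_eq with h | h
    · exact Prod.Lex.le_iff.2 (Or.inl h)
    · refine Prod.Lex.le_iff.2 (Or.inr ⟨h, le_sSup ?_⟩)
      change toLex (a, (ofLex p).2) ∈ s
      rw [← h]
      exact hp
  · intro b hb
    rcases (hub b hb).lt_or_eq with h | h
    · exact Prod.Lex.le_iff.2 (Or.inl h)
    · refine Prod.Lex.le_iff.2 (Or.inr ⟨h, sSup_le ?_⟩)
      intro y hy
      rcases Prod.Lex.le_iff.1 (hb hy) with h' | h'
      · exact absurd h' (by simpa using h.ge)
      · exact h'.2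

/-- The lexicographic square is a conditionally complete linear order. -/
@[reducible]
noncomputable def lexCCLO : ConditionallyCompleteLinearOrder (𝕀 ×ₗ 𝕀) :=
  { (inferInstance : LinearOrder (𝕀 ×ₗ 𝕀)),
    (@conditionallyCompleteLatticeOfLatticeOfsSup (𝕀 ×ₗ 𝕀) inferInstance
      ⟨fun s => (lex_exists_isLUB s).choose⟩
      (fun s _ _ => (lex_exists_isLUB s).choose_spec)) with
    csSup_of_not_bddAbove := fun s h => absurd (OrderTop.bddAbove s) h
    csInf_of_not_bddBelow := fun s h => absurd (OrderBot.bddBelow s) h }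

/-- Continuous injective self-maps of the lexicographic square are strictly monotone. -/
theorem lex_strictMono_or_anti (f : 𝕀 ×ₗ 𝕀 → 𝕀 ×ₗ 𝕀)
    (hc : @Continuous _ _ (Preorder.topology _) (Preorder.topology _) f)
    (hi : Function.Injective f) : StrictMono f ∨ StrictAnti f := by
  letI : ConditionallyCompleteLinearOrder (𝕀 ×ₗ 𝕀) := lexCCLO
  letI : TopologicalSpace (𝕀 ×ₗ 𝕀) := Preorder.topology _
  haveI : OrderTopology (𝕀 ×ₗ 𝕀) := ⟨rfl⟩
  haveI : DenselyOrdered (𝕀 ×ₗ 𝕀) := inferInstance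
  exact Continuous.strictMono_of_inj_boundedOrder' hc hi

theorem lexLE_iff (p q : 𝕀 × 𝕀) : lexLE p q ↔ toLex p ≤ toLex q :=
  Prod.Lex.le_iff.symm

theorem lexLT_iff (p q : 𝕀 × 𝕀) : lexLT p q ↔ toLex p < toLex q :=
  Prod.Lex.lt_iff.symm

theorem continuous_toLex_aux :
    @Continuous (𝕀 × 𝕀) (𝕀 ×ₗ 𝕀) lexTop (Preorder.topology _) toLex := by
  letI : TopologicalSpace (𝕀 × 𝕀) := lexTop
  refine continuous_generateFrom_iff.2 ?_
  rintro _ ⟨a, rfl | rfl⟩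
  · refine TopologicalSpace.isOpen_generateFrom_of_mem (Or.inl ⟨ofLex a, ?_⟩)
    ext x
    exact (lexLT_iff _ _).symm
  · refine TopologicalSpace.isOpen_generateFrom_of_mem (Or.inr ⟨ofLex a, ?_⟩)
    ext x
    exact (lexLT_iff _ _).symm

theorem continuous_ofLex_aux :
    @Continuous (𝕀 ×ₗ 𝕀) (𝕀 × 𝕀) (Preorder.topology _) lexTop ofLex := by
  letI : TopologicalSpace (𝕀 ×ₗ 𝕀) := Preorder.topology _
  refine continuous_generateFrom_iff.2 ?_
  rintro _ (⟨a, rfl⟩ | ⟨a, rfl⟩)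
  · refine TopologicalSpace.isOpen_generateFrom_of_mem ⟨toLex a, Or.inl ?_⟩
    ext x
    exact lexLT_iff _ _
  · refine TopologicalSpace.isOpen_generateFrom_of_mem ⟨toLex a, Or.inr ?_⟩
    ext x
    exact lexLT_iff _ _

/-- Every self-homeomorphism of the lexicographically ordered square is order preserving
or order reversing with respect to the lexicographic order. -/
theorem lex_square_homeomorph_mono_or_anti
    (𝔬 : @Homeomorph (𝕀 × 𝕀) (𝕀 × 𝕀) lexTop lexTop) :
    (∀ x y, lexLE x y → lexLE (𝔬 x) (𝔬 y)) ∨ (∀ x y, lexLE x y → lexLE (𝔬 y) (𝔬 x)) := by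
  letI : TopologicalSpace (𝕀 × 𝕀) := lexTop
  letI : TopologicalSpace (𝕀 ×ₗ 𝕀) := Preorder.topology _
  have hc : Continuous (fun x : 𝕀 ×ₗ 𝕀 => toLex (𝔬 (ofLex x))) :=
    continuous_toLex_aux.comp (𝔬.continuous_toFun.comp continuous_ofLex_aux)
  have hi : Function.Injective (fun x : 𝕀 ×ₗ 𝕀 => toLex (𝔬 (ofLex x))) :=
    toLex.injective.comp (𝔬.toEquiv.injective.comp ofLex.injective)
  rcases lex_strictMono_or_anti _ hc hi with h | h
  · left
    intro x y hxy
    exact (lexLE_iff _ _).2 (h.monotone ((lexLE_iff _ _).1 hxy))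
  · right
    intro x y hxy
    exact (lexLE_iff _ _).2 (h.antitone ((lexLE_iff _ _).1 hxy))
end

section
/- For every homeomorphism 𝔬 : 𝕆 → 𝕆 of the lexicographically ordered square and every s ∈ I, there exists t ∈ I such that 𝔬({s} × I) = {t} × I and 𝔬({(s,0), (s,1)}) = {(t,0), (t,1)}. -/
open Set

/-- The unit interval `[0,1]`. -/
local notation "𝕀" => unitInterval

theorem lexTop_isOpen_gt (a : 𝕀 × 𝕀) : @IsOpen _ lexTop {x | lexLT a x} :=
  TopologicalSpace.isOpen_generateFrom_of_mem (Or.inl ⟨a, rfl⟩)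

theorem lexTop_isOpen_lt (a : 𝕀 × 𝕀) : @IsOpen _ lexTop {x | lexLT x a} :=
  TopologicalSpace.isOpen_generateFrom_of_mem (Or.inr ⟨a, rfl⟩)

theorem lexLT_trichotomy (a b : 𝕀 × 𝕀) (h : a ≠ b) : lexLT a b ∨ lexLT b a := by
  unfold lexLT
  rcases lt_trichotomy a.1 b.1 with h1 | h1 | h1
  · exact Or.inl (Or.inl h1)
  · rcases lt_trichotomy a.2 b.2 with h2 | h2 | h2
    · exact Or.inl (Or.inr ⟨h1, h2⟩)
    · exact absurd (Prod.ext h1 h2) h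
    · exact Or.inr (Or.inr ⟨h1.symm, h2⟩)
  · exact Or.inr (Or.inl h1)

theorem lexLT_asymm (a b : 𝕀 × 𝕀) (h : lexLT a b) (h' : lexLT b a) : False := by
  unfold lexLT at h h'
  rcases h with h | ⟨h, k⟩ <;> rcases h' with h' | ⟨h', k'⟩
  · exact lt_asymm h h'
  · exact absurd h (by rw [h']; exact lt_irrefl _)
  · exact absurd h' (by rw [h]; exact lt_irrefl _)
  · exact lt_asymm k k'

/-- Vertical segments are continuous paths. -/
theorem fiber_continuous (s : 𝕀) : @Continuous 𝕀 (𝕀 × 𝕀) _ lexTop (fun y => (s, y)) := by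
  refine continuous_generateFrom_iff.2 ?_
  rintro S (⟨a, rfl⟩ | ⟨a, rfl⟩)
  · by_cases h1 : a.1 < s
    · simp [lexLT, h1]
    · by_cases h2 : a.1 = s
      · simp only [lexLT, h2, preimage_ofPred_eq, lt_irrefl, true_and, false_or]
        exact isOpen_Ioi
      · simp [lexLT, h1, h2]
  · by_cases h1 : s < a.1
    · simp [lexLT, h1]
    · by_cases h2 : s = a.1
      · simp only [lexLT, h2, preimage_ofPred_eq, lt_irrefl, true_and, false_or]
        exact isOpen_Iio
      · simp [lexLT, h1, h2]

/-- A continuous path `g` from the unit interval stays in one fiber. -/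
theorem path_in_fiber (g : 𝕀 → 𝕀 × 𝕀) (hg : @Continuous 𝕀 (𝕀 × 𝕀) _ lexTop g)
    (u v : 𝕀) : ¬ (g u).1 < (g v).1 := by
  intro huv
  have hgt : ∀ a, IsOpen {y | lexLT a (g y)} := fun a => @IsOpen.preimage _ _ _ lexTop _ hg _ (lexTop_isOpen_gt a)
  have hlt : ∀ a, IsOpen {y | lexLT (g y) a} := fun a => @IsOpen.preimage _ _ _ lexTop _ hg _ (lexTop_isOpen_lt a)
  obtain ⟨m, hm0, hm1⟩ := exists_between (show (0 : 𝕀) < 1 from zero_lt_one)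
  have hit : ∀ c ∈ Ioo (g u).1 (g v).1, ∃ y, g y = (c, m) := by
    intro c hc
    by_contra! hne
    have hpre : IsPreconnected (univ : Set 𝕀) := isPreconnected_univ
    obtain ⟨y, -, hy1, hy2⟩ := hpre _ _ (hlt (c, m)) (hgt (c, m))
      (fun y _ => lexLT_trichotomy _ _ (hne y))
      ⟨u, trivial, Or.inl hc.1⟩ ⟨v, trivial, Or.inl hc.2⟩
    exact lexLT_asymm _ _ hy1 hy2
  let U : 𝕀 → Set 𝕀 := fun c => {y | lexLT (c, 0) (g y)} ∩ {y | lexLT (g y) (c, 1)}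
  have hU : ∀ c y, y ∈ U c → (g y).1 = c := by
    rintro c y ⟨h1, h2⟩
    have h1' : c ≤ (g y).1 := by
      rcases h1 with h | h
      · exact h.le
      · exact h.1.le
    have h2' : (g y).1 ≤ c := by
      rcases h2 with h | h
      · exact h.le
      · exact h.1.le
    exact le_antisymm h2' h1'
  have hcount : (Ioo (g u).1 (g v).1).Countable := by
    refine Set.PairwiseDisjoint.countable_of_isOpen (s := U) ?_ ?_ ?_
    · intro c _ d _ hcd
      refine Set.disjoint_left.2 fun y hy hy' => hcd ?_
      rw [← hU c y hy, hU d y hy']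
    · exact fun c _ => (hgt _).inter (hlt _)
    · intro c hc
      obtain ⟨y, hy⟩ := hit c hc
      refine ⟨y, ?_, ?_⟩
      · exact Or.inr ⟨by rw [hy], by rw [hy]; exact hm0⟩
      · exact Or.inr ⟨by rw [hy], by rw [hy]; exact hm1⟩
  have himg : (Ioo ((g u).1 : ℝ) ((g v).1 : ℝ)) ⊆ Subtype.val '' (Ioo (g u).1 (g v).1) := by
    intro x hx
    exact ⟨⟨x, (g u).1.2.1.trans hx.1.le, hx.2.le.trans (g v).1.2.2⟩, ⟨hx.1, hx.2⟩, rfl⟩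
  have hc := (hcount.image Subtype.val).mono himg
  rw [← Cardinal.le_aleph0_iff_set_countable, Cardinal.mk_Ioo_real huv] at hc
  exact absurd hc (not_le.2 Cardinal.aleph0_lt_continuum)

theorem fibers_core (f g : 𝕀 × 𝕀 → 𝕀 × 𝕀) (hgf : ∀ x, g (f x) = x) (hfg : ∀ x, f (g x) = x)
    (hcont : ∀ r, @Continuous 𝕀 (𝕀 × 𝕀) _ lexTop (fun y => f (r, y)))
    (hcont' : ∀ r, @Continuous 𝕀 (𝕀 × 𝕀) _ lexTop (fun y => g (r, y))) (s : 𝕀) :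
    ∃ t : 𝕀, f '' (({s} : Set 𝕀) ×ˢ (univ : Set 𝕀)) = ({t} : Set 𝕀) ×ˢ (univ : Set 𝕀) ∧
      f '' {((s, 0) : 𝕀 × 𝕀), (s, 1)} = {((t, 0) : 𝕀 × 𝕀), (t, 1)} := by
  have hf : ∀ y, (f (s, y)).1 = (f (s, 0)).1 := fun y =>
    le_antisymm (not_lt.1 (path_in_fiber _ (hcont s) 0 y))
      (not_lt.1 (path_in_fiber _ (hcont s) y 0))
  obtain ⟨t, ht⟩ : ∃ t, t = (f (s, 0)).1 := ⟨_, rfl⟩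
  rw [← ht] at hf
  have hs : g (t, (f (s, 0)).2) = (s, 0) := by
    rw [ht]; exact hgf _
  have hb : ∀ y, (g (t, y)).1 = s := fun y => by
    have := le_antisymm (not_lt.1 (path_in_fiber _ (hcont' t) (f (s, 0)).2 y))
      (not_lt.1 (path_in_fiber _ (hcont' t) y (f (s, 0)).2))
    rw [this, hs]
  let h : 𝕀 → 𝕀 := fun y => (f (s, y)).2
  have hh : ∀ y, f (s, y) = (t, h y) := fun y => Prod.ext (hf y) rfl
  have hinj : Function.Injective h := by
    intro y z hyz
    have : f (s, y) = f (s, z) := by rw [hh, hh, hyz]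
    exact congrArg Prod.snd ((Function.LeftInverse.injective hgf) this)
  have hsurj : Function.Surjective h := by
    intro z
    refine ⟨(g (t, z)).2, ?_⟩
    have h1 : (s, (g (t, z)).2) = g (t, z) := Prod.ext (hb z).symm rfl
    change (f (s, (g (t, z)).2)).2 = z
    rw [h1, hfg]
  have hhc : Continuous h := by
    refine OrderTopology.continuous_iff.2 fun a => ⟨?_, ?_⟩
    · have := @IsOpen.preimage _ _ _ lexTop _ (hcont s) _ (lexTop_isOpen_gt (t, a))
      convert this using 1
      ext y
      simp [lexLT, hh]
    · have := @IsOpen.preimage _ _ _ lexTop _ (hcont s) _ (lexTop_isOpen_lt (t, a))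
      convert this using 1
      ext y
      simp [lexLT, hh]
  refine ⟨t, ?_, ?_⟩
  · ext ⟨a, b⟩
    constructor
    · rintro ⟨⟨c, d⟩, ⟨hc, -⟩, hcd⟩
      obtain rfl : c = s := hc
      rw [hh] at hcd
      exact ⟨(congrArg Prod.fst hcd).symm, trivial⟩
    · rintro ⟨ha, -⟩
      obtain rfl : a = t := ha
      obtain ⟨d, rfl⟩ := hsurj b
      exact ⟨(s, d), ⟨rfl, trivial⟩, hh d⟩
  · rw [image_pair, hh, hh]
    obtain ⟨y0, hy0⟩ := hsurj 0
    obtain ⟨y1, hy1⟩ := hsurj 1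
    rcases hhc.strictMono_of_inj hinj with hm | hm
    · have e0 : h 0 = 0 := le_antisymm ((hm.monotone unitInterval.nonneg').trans_eq hy0) (h 0).2.1
      have e1 : h 1 = 1 := le_antisymm (h 1).2.2 (hy1.symm.trans_le (hm.monotone unitInterval.le_one'))
      rw [e0, e1]
    · have e0 : h 0 = 1 := le_antisymm (h 0).2.2 (hy1.symm.trans_le (hm.antitone unitInterval.nonneg'))
      have e1 : h 1 = 0 := le_antisymm ((hm.antitone unitInterval.le_one').trans_eq hy0) (h 1).2.1
      rw [e0, e1, pair_comm]

/-- For every self-homeomorphism `𝔬` of the lexicographically ordered square and every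
`s ∈ [0,1]` there is `t ∈ [0,1]` with `𝔬({s} × [0,1]) = {t} × [0,1]` and
`𝔬({(s,0),(s,1)}) = {(t,0),(t,1)}`. -/
theorem lex_square_homeomorph_maps_fibers_to_fibers
    (𝔬 : @Homeomorph (𝕀 × 𝕀) (𝕀 × 𝕀) lexTop lexTop) (s : 𝕀) :
    ∃ t : 𝕀, ⇑𝔬 '' (({s} : Set 𝕀) ×ˢ (univ : Set 𝕀)) = ({t} : Set 𝕀) ×ˢ (univ : Set 𝕀) ∧
      ⇑𝔬 '' {((s, 0) : 𝕀 × 𝕀), (s, 1)} = {((t, 0) : 𝕀 × 𝕀), (t, 1)} := by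
  exact fibers_core 𝔬 (@Homeomorph.symm _ _ lexTop lexTop 𝔬)
    (@Homeomorph.symm_apply_apply _ _ lexTop lexTop 𝔬)
    (@Homeomorph.apply_symm_apply _ _ lexTop lexTop 𝔬)
    (fun r => @Continuous.comp _ _ _ _ lexTop lexTop _ _
      (@Homeomorph.continuous _ _ lexTop lexTop 𝔬) (fiber_continuous r))
    (fun r => @Continuous.comp _ _ _ _ lexTop lexTop _ _
      (@Homeomorph.continuous _ _ lexTop lexTop (@Homeomorph.symm _ _ lexTop lexTop 𝔬))
      (fiber_continuous r)) s
end

section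
/- For every homeomorphism 𝔬 : 𝕆 → 𝕆 of the lexicographically ordered square, exactly one of the following holds: (a) 𝔬(Pᵢ) = Pᵢ and 𝔬(Lᵢ) = Lᵢ for i = 1,2,3,4, and 𝔬 is order preserving with respect to the lexicographic order; or (b) 𝔬(P₁) = P₃, 𝔬(P₂) = P₄, 𝔬(P₃) = P₁, 𝔬(P₄) = P₂, 𝔬(L₁) = L₃, 𝔬(L₂) = L₄, 𝔬(L₃) = L₁, 𝔬(L₄) = L₂, and 𝔬 is order reversing with respect to the lexicographic order. -/
open Set

/-- The unit interval `[0,1]`. -/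
local notation "𝕀" => unitInterval

namespace LexSq

theorem lt_iff (p q : 𝕀 × 𝕀) : toLex p < toLex q ↔ lexLT p q := Prod.Lex.toLex_lt_toLex
theorem le_iff (p q : 𝕀 × 𝕀) : toLex p ≤ toLex q ↔ lexLE p q := Prod.Lex.toLex_le_toLex

theorem le_iff_not_lt (p q : 𝕀 × 𝕀) : lexLE p q ↔ ¬ lexLT q p := by
  rw [← lt_iff, ← le_iff, not_lt]

theorem exists_lub (s : Set (𝕀 ×ₗ 𝕀)) : ∃ c, IsLUB s c := by
  have key : ∀ t : Set 𝕀, ∃ a, IsLUB t a := fun t => ⟨sSup t, isLUB_sSup t⟩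
  obtain ⟨a, ha⟩ := key ((fun p => (ofLex p).1) '' s)
  obtain ⟨b, hb⟩ := key {b | toLex (a, b) ∈ s}
  refine ⟨toLex (a, b), ?_, ?_⟩
  · intro p hp
    have h1 : (ofLex p).1 ≤ a := ha.1 ⟨p, hp, rfl⟩
    rw [Prod.Lex.le_iff]
    rcases h1.lt_or_eq with h | h
    · exact Or.inl h
    · refine Or.inr ⟨h, hb.1 ?_⟩
      have : toLex (a, (ofLex p).2) = p := by rw [← h]; rfl
      simpa [this] using hp
  · intro c hc
    have h1 : a ≤ (ofLex c).1 := by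
      apply ha.2
      rintro _ ⟨p, hp, rfl⟩
      have := (Prod.Lex.le_iff).1 (hc hp)
      rcases this with h | h
      · exact h.le
      · exact h.1.le
    rw [Prod.Lex.le_iff]
    rcases h1.lt_or_eq with h | h
    · exact Or.inl h
    · refine Or.inr ⟨h, hb.2 ?_⟩
      intro b' hb'
      rcases (Prod.Lex.le_iff).1 (hc hb') with h' | h'
      · exact absurd h' (by simp [h])
      · exact h'.2

/-- The lexicographic square is (conditionally) complete. -/
noncomputable abbrev ccl : ConditionallyCompleteLinearOrder (𝕀 ×ₗ 𝕀) where
  __ := (inferInstance : LinearOrder (𝕀 ×ₗ 𝕀))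
  __ := (LinearOrder.toLattice : Lattice (𝕀 ×ₗ 𝕀))
  __ :=
    letI : SupSet (𝕀 ×ₗ 𝕀) := ⟨fun s => (exists_lub s).choose⟩
    conditionallyCompleteLatticeOfLatticeOfsSup _ fun s _ _ => (exists_lub s).choose_spec
  csSup_of_not_bddAbove s hs := absurd ⟨toLex (1, 1), fun p _ => by
    rw [Prod.Lex.le_iff]
    rcases (unitInterval.le_one' (t := (ofLex p).1)).lt_or_eq with h | h
    · exact Or.inl h
    · exact Or.inr ⟨h, unitInterval.le_one'⟩⟩ hs
  csInf_of_not_bddBelow s hs := absurd ⟨toLex (0, 0), fun p _ => by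
    rw [Prod.Lex.le_iff]
    rcases (unitInterval.nonneg' (t := (ofLex p).1)).lt_or_eq with h | h
    · exact Or.inl h
    · exact Or.inr ⟨h, unitInterval.nonneg'⟩⟩ hs

theorem mono_or_anti (f : 𝕀 × 𝕀 → 𝕀 × 𝕀) (hf : @Continuous _ _ lexTop lexTop f)
    (hi : Function.Injective f) :
    (∀ x y, lexLT x y → lexLT (f x) (f y)) ∨ (∀ x y, lexLT x y → lexLT (f y) (f x)) := by
  letI := ccl
  letI : TopologicalSpace (𝕀 ×ₗ 𝕀) := lexTop
  haveI : OrderTopology (𝕀 ×ₗ 𝕀) := by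
    constructor
    change lexTop = _
    unfold lexTop
    congr 1
    ext S
    constructor
    · rintro (⟨a, rfl⟩ | ⟨a, rfl⟩)
      · exact ⟨toLex a, Or.inl (by ext x; exact (lt_iff a x).symm)⟩
      · exact ⟨toLex a, Or.inr (by ext x; exact (lt_iff x a).symm)⟩
    · rintro ⟨a, rfl | rfl⟩
      · exact Or.inl ⟨ofLex a, by ext x; exact (lt_iff (ofLex a) x)⟩
      · exact Or.inr ⟨ofLex a, by ext x; exact (lt_iff x (ofLex a))⟩
  let g : 𝕀 ×ₗ 𝕀 → 𝕀 ×ₗ 𝕀 := fun x => toLex (f (ofLex x))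
  have hg : Continuous g := hf
  have hgi : Function.Injective g := hi
  rcases hg.strictMono_of_inj_boundedOrder' hgi with h | h
  · left
    intro x y hxy
    exact (lt_iff _ _).1 (h ((lt_iff x y).2 hxy))
  · right
    intro x y hxy
    exact (lt_iff _ _).1 (h ((lt_iff x y).2 hxy))

/-- An order-theoretic relation detecting points in the same column. -/
def V (p q : 𝕀 × 𝕀) : Prop := ∃ D : Set (𝕀 × 𝕀), D.Countable ∧
  ∀ a b, lexLE p a → lexLT a b → lexLE b q → ∃ d ∈ D, lexLT a d ∧ lexLT d b

theorem V_iff (p q : 𝕀 × 𝕀) (hpq : lexLE p q) : V p q ↔ p.1 = q.1 := by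
  constructor
  · rintro ⟨D, hD, h⟩
    by_contra hne
    have hlt : p.1 < q.1 := by
      rcases hpq with h | h
      · exact h
      · exact absurd h.1 hne
    have hsub : Ioo p.1 q.1 ⊆ Prod.fst '' D := by
      intro x hx
      obtain ⟨d, hd, h1, h2⟩ := h (x, 0) (x, 1) (Or.inl hx.1) (Or.inr ⟨rfl, zero_lt_one⟩)
        (Or.inl hx.2)
      refine ⟨d, hd, ?_⟩
      simp only [lexLT] at h1 h2
      rcases h1 with h1 | h1
      · rcases h2 with h2 | h2
        · exact absurd (h1.trans h2) (lt_irrefl _)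
        · exact h2.1
      · exact h1.1.symm
    have hc : (Ioo p.1 q.1).Countable := (hD.image _).mono hsub
    have hc2 : (Ioo (p.1 : ℝ) q.1).Countable := by
      refine (hc.image (Subtype.val)).mono ?_
      intro x hx
      exact ⟨⟨x, p.1.2.1.trans hx.1.le, hx.2.le.trans q.1.2.2⟩, ⟨hx.1, hx.2⟩, rfl⟩
    rw [← Cardinal.le_aleph0_iff_set_countable, Cardinal.mk_Ioo_real hlt] at hc2
    exact absurd hc2 (not_le.2 Cardinal.aleph0_lt_continuum)
  · intro he
    obtain ⟨E, hE, hEd⟩ := TopologicalSpace.exists_countable_dense 𝕀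
    refine ⟨(fun y => (p.1, y)) '' E, hE.image _, ?_⟩
    intro a b h1 h2 h3
    have : p.1 = a.1 ∧ a.1 = b.1 ∧ a.2 < b.2 := by
      simp only [lexLT, lexLE] at *
      grind
    obtain ⟨y, hy, hy1, hy2⟩ := hEd.exists_between this.2.2
    exact ⟨(p.1, y), ⟨y, hy, rfl⟩, Or.inr ⟨this.1.symm, hy1⟩,
      Or.inr ⟨this.1.trans this.2.1, hy2⟩⟩

theorem V_map (e : 𝕀 × 𝕀 ≃ 𝕀 × 𝕀) (h : ∀ x y, lexLT (e x) (e y) ↔ lexLT x y)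
    (p q : 𝕀 × 𝕀) (hV : V p q) : V (e p) (e q) := by
  obtain ⟨D, hD, hV⟩ := hV
  refine ⟨e '' D, hD.image _, ?_⟩
  intro a b
  obtain ⟨a, rfl⟩ := e.surjective a
  obtain ⟨b, rfl⟩ := e.surjective b
  intro h1 h2 h3
  rw [le_iff_not_lt, h, ← le_iff_not_lt] at h1 h3
  rw [h] at h2
  obtain ⟨d, hd, h4, h5⟩ := hV a b h1 h2 h3
  exact ⟨e d, ⟨d, hd, rfl⟩, (h _ _).2 h4, (h _ _).2 h5⟩

theorem le_total' (p q : 𝕀 × 𝕀) : lexLE p q ∨ lexLE q p := by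
  rw [← le_iff, ← le_iff]; exact le_total _ _

theorem col_map (e : 𝕀 × 𝕀 ≃ 𝕀 × 𝕀) (h : ∀ x y, lexLT (e x) (e y) ↔ lexLT x y)
    (p q : 𝕀 × 𝕀) (hpq : p.1 = q.1) : (e p).1 = (e q).1 := by
  wlog hle : lexLE p q generalizing p q
  · exact (this q p hpq.symm ((le_total' p q).resolve_left hle)).symm
  have hle' : lexLE (e p) (e q) := by rwa [le_iff_not_lt, h, ← le_iff_not_lt]
  exact (V_iff _ _ hle').1 (V_map e h p q ((V_iff _ _ hle).2 hpq))

theorem bot_map (e : 𝕀 × 𝕀 ≃ 𝕀 × 𝕀) (h : ∀ x y, lexLT (e x) (e y) ↔ lexLT x y)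
    (hc : ∀ p q : 𝕀 × 𝕀, (e p).1 = (e q).1 → p.1 = q.1)
    (p : 𝕀 × 𝕀) (hp : p.2 = 0) : (e p).2 = 0 := by
  obtain ⟨q, hq⟩ := e.surjective ((e p).1, 0)
  have h1 := hc q p (by rw [hq])
  have h2 : ¬ lexLT q p := by
    rintro (h | h)
    · exact h.ne h1
    · rw [hp] at h; exact absurd h.2 (not_lt.2 unitInterval.nonneg')
  rw [← h, hq] at h2
  by_contra h3
  exact h2 (Or.inr ⟨rfl, unitInterval.pos_iff_ne_zero.2 h3⟩)

theorem top_map (e : 𝕀 × 𝕀 ≃ 𝕀 × 𝕀) (h : ∀ x y, lexLT (e x) (e y) ↔ lexLT x y)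
    (hc : ∀ p q : 𝕀 × 𝕀, (e p).1 = (e q).1 → p.1 = q.1)
    (p : 𝕀 × 𝕀) (hp : p.2 = 1) : (e p).2 = 1 := by
  obtain ⟨q, hq⟩ := e.surjective ((e p).1, 1)
  have h1 := hc q p (by rw [hq])
  have h2 : ¬ lexLT p q := by
    rintro (h | h)
    · exact h.ne h1.symm
    · rw [hp] at h; exact absurd h.2 (not_lt.2 unitInterval.le_one')
  rw [← h, hq] at h2
  by_contra h3
  exact h2 (Or.inr ⟨rfl, unitInterval.lt_one_iff_ne_one.2 h3⟩)

theorem left_map (e : 𝕀 × 𝕀 ≃ 𝕀 × 𝕀) (h : ∀ x y, lexLT (e x) (e y) ↔ lexLT x y)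
    (hc : ∀ p q : 𝕀 × 𝕀, p.1 = q.1 → (e p).1 = (e q).1)
    (p : 𝕀 × 𝕀) (hp : p.1 = 0) : (e p).1 = 0 := by
  have h0 : (e (0, 0)).1 = 0 := by
    by_contra h3
    obtain ⟨q, hq⟩ := e.surjective (0, 0)
    have h4 : lexLT (e q) (e (0, 0)) := by
      rw [hq]; exact Or.inl (unitInterval.pos_iff_ne_zero.2 h3)
    rw [h] at h4
    rcases h4 with h4 | h4
    · exact absurd h4 (not_lt.2 unitInterval.nonneg')
    · exact absurd h4.2 (not_lt.2 unitInterval.nonneg')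
  rw [← h0]; exact hc _ _ hp

theorem right_map (e : 𝕀 × 𝕀 ≃ 𝕀 × 𝕀) (h : ∀ x y, lexLT (e x) (e y) ↔ lexLT x y)
    (hc : ∀ p q : 𝕀 × 𝕀, p.1 = q.1 → (e p).1 = (e q).1)
    (p : 𝕀 × 𝕀) (hp : p.1 = 1) : (e p).1 = 1 := by
  have h0 : (e (1, 1)).1 = 1 := by
    by_contra h3
    obtain ⟨q, hq⟩ := e.surjective (1, 1)
    have h4 : lexLT (e (1, 1)) (e q) := by
      rw [hq]; exact Or.inl (unitInterval.lt_one_iff_ne_one.2 h3)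
    rw [h] at h4
    rcases h4 with h4 | h4
    · exact absurd h4 (not_lt.2 unitInterval.le_one')
    · exact absurd h4.2 (not_lt.2 unitInterval.le_one')
  rw [← h0]; exact hc _ _ hp

theorem image_eq (e : 𝕀 × 𝕀 ≃ 𝕀 × 𝕀) (L : Set (𝕀 × 𝕀)) (h : ∀ x, x ∈ L ↔ e x ∈ L) :
    e '' L = L := by
  ext y
  obtain ⟨x, rfl⟩ := e.surjective y
  rw [e.injective.mem_set_image, h]

theorem mono_case (e : 𝕀 × 𝕀 ≃ 𝕀 × 𝕀) (h0 : ∀ x y, lexLT x y → lexLT (e x) (e y)) :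
    (e P₁ = P₁ ∧ e P₂ = P₂ ∧ e P₃ = P₃ ∧ e P₄ = P₄ ∧
        ⇑e '' L₁ = L₁ ∧ ⇑e '' L₂ = L₂ ∧ ⇑e '' L₃ = L₃ ∧ ⇑e '' L₄ = L₄ ∧
        ∀ x y, lexLE x y → lexLE (e x) (e y)) := by
  have h : ∀ x y, lexLT (e x) (e y) ↔ lexLT x y := by
    intro x y
    refine ⟨fun hxy => ?_, h0 x y⟩
    by_contra hn
    rw [← le_iff_not_lt, ← le_iff, le_iff_lt_or_eq, lt_iff] at hn
    rcases hn with hn | hn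
    · have := h0 _ _ hn
      rw [← lt_iff] at this hxy
      exact lt_asymm this hxy
    · have : y = x := hn
      rw [this, ← lt_iff] at hxy
      exact lt_irrefl _ hxy
  have h' : ∀ x y, lexLT (e.symm x) (e.symm y) ↔ lexLT x y := by
    intro x y; rw [← h]; simp
  have hc := col_map e h
  have hc' := col_map e.symm h'
  have hcr : ∀ p q : 𝕀 × 𝕀, (e p).1 = (e q).1 → p.1 = q.1 := by
    intro p q hpq; simpa using hc' _ _ hpq
  have hcr' : ∀ p q : 𝕀 × 𝕀, (e.symm p).1 = (e.symm q).1 → p.1 = q.1 := by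
    intro p q hpq; simpa using hc _ _ hpq
  have hb : ∀ p : 𝕀 × 𝕀, (e p).2 = 0 ↔ p.2 = 0 := fun p =>
    ⟨fun hp => by simpa using bot_map e.symm h' hcr' _ hp, bot_map e h hcr p⟩
  have ht : ∀ p : 𝕀 × 𝕀, (e p).2 = 1 ↔ p.2 = 1 := fun p =>
    ⟨fun hp => by simpa using top_map e.symm h' hcr' _ hp, top_map e h hcr p⟩
  have hl : ∀ p : 𝕀 × 𝕀, (e p).1 = 0 ↔ p.1 = 0 := fun p =>
    ⟨fun hp => by simpa using left_map e.symm h' hc' _ hp, left_map e h hc p⟩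
  have hr : ∀ p : 𝕀 × 𝕀, (e p).1 = 1 ↔ p.1 = 1 := fun p =>
    ⟨fun hp => by simpa using right_map e.symm h' hc' _ hp, right_map e h hc p⟩
  refine ⟨Prod.ext ((hl _).2 rfl) ((hb _).2 rfl), Prod.ext ((hl _).2 rfl) ((ht _).2 rfl),
    Prod.ext ((hr _).2 rfl) ((ht _).2 rfl), Prod.ext ((hr _).2 rfl) ((hb _).2 rfl),
    image_eq e _ fun x => ?_, image_eq e _ fun x => ?_, image_eq e _ fun x => ?_,
    image_eq e _ fun x => ?_, fun x y hxy => ?_⟩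
  · simp only [L₁, mem_prod, mem_Ioo, mem_singleton_iff, unitInterval.pos_iff_ne_zero,
      unitInterval.lt_one_iff_ne_one, ne_eq, hb, ht, hl, hr]
  · simp only [L₂, mem_prod, mem_Ioo, mem_singleton_iff, unitInterval.pos_iff_ne_zero,
      unitInterval.lt_one_iff_ne_one, ne_eq, hb, ht, hl, hr]
  · simp only [L₃, mem_prod, mem_Ioo, mem_singleton_iff, unitInterval.pos_iff_ne_zero,
      unitInterval.lt_one_iff_ne_one, ne_eq, hb, ht, hl, hr]
  · simp only [L₄, mem_prod, mem_Ioo, mem_singleton_iff, unitInterval.pos_iff_ne_zero,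
      unitInterval.lt_one_iff_ne_one, ne_eq, hb, ht, hl, hr]
  · rwa [le_iff_not_lt, h, ← le_iff_not_lt]

/-- The point reflection of the square. -/
def rf : 𝕀 × 𝕀 ≃ 𝕀 × 𝕀 where
  toFun p := (unitInterval.symm p.1, unitInterval.symm p.2)
  invFun p := (unitInterval.symm p.1, unitInterval.symm p.2)
  left_inv p := by simp
  right_inv p := by simp

theorem rf_rf (p : 𝕀 × 𝕀) : rf (rf p) = p := rf.left_inv p

theorem rf_lt (p q : 𝕀 × 𝕀) : lexLT (rf p) (rf q) ↔ lexLT q p := by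
  simp [rf, lexLT, unitInterval.symm_lt_symm, eq_comm]

theorem rf_le (p q : 𝕀 × 𝕀) : lexLE (rf p) (rf q) ↔ lexLE q p := by
  rw [le_iff_not_lt, rf_lt, ← le_iff_not_lt]

theorem rf_image (L M : Set (𝕀 × 𝕀)) (h : ∀ x, x ∈ M ↔ rf x ∈ L) : rf '' L = M := by
  ext y
  rw [h, mem_image]
  constructor
  · rintro ⟨x, hx, rfl⟩; rwa [rf_rf]
  · intro hy; exact ⟨rf y, hy, rf_rf y⟩

theorem s0 (x : 𝕀) : unitInterval.symm x = 0 ↔ x = 1 := by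
  simp
theorem s1 (x : 𝕀) : unitInterval.symm x = 1 ↔ x = 0 := by
  simp

theorem rf₁ : rf '' L₁ = L₃ := rf_image _ _ fun x => by
  simp only [L₁, L₃, rf, Equiv.coe_fn_mk, mem_prod, mem_Ioo, mem_singleton_iff,
    unitInterval.pos_iff_ne_zero, unitInterval.lt_one_iff_ne_one, ne_eq, s0, s1]
  tauto
theorem rf₂ : rf '' L₂ = L₄ := rf_image _ _ fun x => by
  simp only [L₂, L₄, rf, Equiv.coe_fn_mk, mem_prod, mem_Ioo, mem_singleton_iff,
    unitInterval.pos_iff_ne_zero, unitInterval.lt_one_iff_ne_one, ne_eq, s0, s1]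
  tauto
theorem rf₃ : rf '' L₃ = L₁ := by
  rw [← rf₁, image_image]; simp [rf_rf]
theorem rf₄ : rf '' L₄ = L₂ := by
  rw [← rf₂, image_image]; simp [rf_rf]

theorem anti_case (e : 𝕀 × 𝕀 ≃ 𝕀 × 𝕀) (h0 : ∀ x y, lexLT x y → lexLT (e y) (e x)) :
    (e P₁ = P₃ ∧ e P₂ = P₄ ∧ e P₃ = P₁ ∧ e P₄ = P₂ ∧
        ⇑e '' L₁ = L₃ ∧ ⇑e '' L₂ = L₄ ∧ ⇑e '' L₃ = L₁ ∧ ⇑e '' L₄ = L₂ ∧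
        ∀ x y, lexLE x y → lexLE (e y) (e x)) := by
  have key := mono_case (e.trans rf) fun x y hxy => (rf_lt _ _).2 (h0 x y hxy)
  have hp : ∀ p q, (e.trans rf) p = q → e p = rf q := by
    rintro p q rfl; exact (rf_rf _).symm
  have hi : ∀ L M : Set (𝕀 × 𝕀), (e.trans rf) '' L = M → e '' L = rf '' M := by
    rintro L M rfl
    rw [image_image]; simp [rf_rf]
  obtain ⟨k1, k2, k3, k4, l1, l2, l3, l4, hm⟩ := key
  refine ⟨(hp _ _ k1).trans ?_, (hp _ _ k2).trans ?_, (hp _ _ k3).trans ?_, (hp _ _ k4).trans ?_,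
    (hi _ _ l1).trans rf₁, (hi _ _ l2).trans rf₂, (hi _ _ l3).trans rf₃, (hi _ _ l4).trans rf₄,
    fun x y hxy => (rf_le _ _).1 (hm x y hxy)⟩ <;> simp [rf, P₁, P₂, P₃, P₄]

end LexSq

/-- For every self-homeomorphism of the lexicographically ordered square, exactly one
of the following holds: (a) it fixes every corner `Pᵢ`, maps every side `Lᵢ` onto
itself and is order preserving; (b) it swaps `P₁ ↔ P₃`, `P₂ ↔ P₄`, `L₁ ↔ L₃`,
`L₂ ↔ L₄` and is order reversing. -/
theorem lex_square_homeomorph_dichotomy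
    (𝔬 : @Homeomorph (𝕀 × 𝕀) (𝕀 × 𝕀) lexTop lexTop) :
    Xor'
      (𝔬 P₁ = P₁ ∧ 𝔬 P₂ = P₂ ∧ 𝔬 P₃ = P₃ ∧ 𝔬 P₄ = P₄ ∧
        ⇑𝔬 '' L₁ = L₁ ∧ ⇑𝔬 '' L₂ = L₂ ∧ ⇑𝔬 '' L₃ = L₃ ∧ ⇑𝔬 '' L₄ = L₄ ∧
        ∀ x y, lexLE x y → lexLE (𝔬 x) (𝔬 y))
      (𝔬 P₁ = P₃ ∧ 𝔬 P₂ = P₄ ∧ 𝔬 P₃ = P₁ ∧ 𝔬 P₄ = P₂ ∧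
        ⇑𝔬 '' L₁ = L₃ ∧ ⇑𝔬 '' L₂ = L₄ ∧ ⇑𝔬 '' L₃ = L₁ ∧ ⇑𝔬 '' L₄ = L₂ ∧
        ∀ x y, lexLE x y → lexLE (𝔬 y) (𝔬 x)) := by
  have hne : P₁ ≠ P₃ := by simp [P₁, P₃]
  let e := @Homeomorph.toEquiv _ _ lexTop lexTop 𝔬
  rcases LexSq.mono_or_anti e (@Homeomorph.continuous_toFun _ _ lexTop lexTop 𝔬) e.injective with h | h
  · have := LexSq.mono_case e h
    exact Or.inl ⟨this, fun h' => hne (this.1.symm.trans h'.1)⟩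
  · have := LexSq.anti_case e h
    exact Or.inr ⟨this, fun h' => hne (h'.1.symm.trans this.1)⟩
end

section
/- Let p, q : I → I be homeomorphisms of the unit interval. The product map p × q : 𝔸 → 𝔸, (s,t) ↦ (p(s), q(t)), is a homeomorphism of the Alexandroff square if and only if p = q. -/
open Set

/-- The unit interval `[0,1]` with its Euclidean (subspace) topology. -/
local notation "𝕀" => unitInterval

theorem alex_cofinite (s : 𝕀) (W : Set (𝕀 × 𝕀)) (hW : TopologicalSpace.GenerateOpen alexBasis W) :
    (s, s) ∈ W → {t : 𝕀 | (t, s) ∉ W}.Finite := by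
  induction hW with
  | basic S hS =>
    intro h
    rcases hS with ⟨x, U, hU, hx, rfl⟩ | ⟨U, F, hU, hF, rfl⟩
    · obtain ⟨h1, h2⟩ := h
      simp only [mem_singleton_iff] at h1
      subst h1
      exact absurd h2 hx
    · refine hF.subset ?_
      intro t ht
      by_contra hc
      exact ht ⟨⟨mem_univ _, h.1.2⟩, fun h' => hc h'.1⟩
  | univ => intro _; simp
  | inter A B _ _ ihA ihB =>
    intro h
    refine ((ihA h.1).union (ihB h.2)).subset ?_
    intro t ht
    by_contra hc
    simp only [mem_union, mem_ofPred_eq, not_or, not_not] at hc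
    exact ht hc
  | sUnion K _ ih =>
    intro h
    obtain ⟨A, hA, hsA⟩ := h
    exact (ih A hA hsA).subset fun t ht h' => ht ⟨A, hA, h'⟩

theorem alex_cont (p : 𝕀 ≃ₜ 𝕀) :
    @Continuous (𝕀 × 𝕀) (𝕀 × 𝕀) alexTop alexTop (fun st => (p st.1, p st.2)) := by
  refine continuous_generateFrom_iff.2 ?_
  intro S hS
  refine TopologicalSpace.GenerateOpen.basic _ ?_
  rcases hS with ⟨x, U, hU, hx, rfl⟩ | ⟨U, F, hU, hF, rfl⟩
  · refine Or.inl ⟨p.symm x, p ⁻¹' U, hU.preimage p.continuous, by simpa using hx, ?_⟩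
    ext ⟨a, b⟩
    simp only [mem_preimage, mem_prod, mem_singleton_iff]
    rw [show a = p.symm x ↔ p a = x from p.toEquiv.eq_symm_apply]
  · refine Or.inr ⟨p ⁻¹' U, p ⁻¹' F, hU.preimage p.continuous,
      hF.preimage p.injective.injOn, ?_⟩
    ext ⟨a, b⟩
    simp

/-- For homeomorphisms `p q` of `[0,1]` (Euclidean topology), the product map
`(s,t) ↦ (p s, q t)` is a self-homeomorphism of the Alexandroff square iff `p = q`. -/
theorem alexandroff_prodMap_homeomorph_iff (p q : 𝕀 ≃ₜ 𝕀) :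
    (∃ 𝔥 : @Homeomorph (𝕀 × 𝕀) (𝕀 × 𝕀) alexTop alexTop,
        ⇑𝔥 = fun st : 𝕀 × 𝕀 => (p st.1, q st.2)) ↔ p = q := by
  constructor
  · rintro ⟨h, hh⟩
    ext1 s
    by_contra hne
    have hc := @Homeomorph.continuous_toFun _ _ alexTop alexTop h
    have hopen : @IsOpen _ alexTop (({p s} : Set 𝕀) ×ˢ ({p s}ᶜ : Set 𝕀)) :=
      TopologicalSpace.GenerateOpen.basic _
        (Or.inl ⟨p s, {p s}ᶜ, isOpen_compl_singleton, by simp, rfl⟩)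
    have hpre := (@continuous_def _ _ alexTop alexTop _).1 hc _ hopen
    change @IsOpen _ alexTop (⇑h ⁻¹' _) at hpre
    rw [hh] at hpre
    have hfin := alex_cofinite s _ hpre ⟨rfl, fun h' => hne (Eq.symm h')⟩
    have hsub : ({s}ᶜ : Set 𝕀).Finite := by
      refine hfin.subset ?_
      intro t ht h'
      exact ht (p.injective h'.1)
    haveI : Infinite 𝕀 := (Set.Icc_infinite (zero_lt_one : (0:ℝ) < 1)).to_subtype
    exact (Set.finite_singleton s).infinite_compl hsub
  · rintro rfl
    exact ⟨@Homeomorph.mk _ _ alexTop alexTop (p.toEquiv.prodCongr p.toEquiv)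
      (alex_cont p) (alex_cont p.symm), rfl⟩
end

section
/- Let p, q : I → I be homeomorphisms of the unit interval. The product map p × q : 𝕆 → 𝕆, (s,t) ↦ (p(s), q(t)), is a homeomorphism of the lexicographically ordered square if and only if the composition p ∘ q : I → I is order preserving (equivalently, strictly increasing). -/
open Set

/-- The unit interval `[0,1]`. -/
local notation "𝕀" => unitInterval

theorem lex_cont_aux (p q : 𝕀 ≃ₜ 𝕀)
    (h : (StrictMono p ∧ StrictMono q) ∨ (StrictAnti p ∧ StrictAnti q)) :
    @Continuous _ _ lexTop lexTop (fun st : 𝕀 × 𝕀 => (p st.1, q st.2)) := by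
  have key : ∀ b : 𝕀 × 𝕀, ∃ c : 𝕀 × 𝕀, b = (p c.1, q c.2) := fun b =>
    ⟨(p.symm b.1, q.symm b.2), by simp⟩
  refine continuous_generateFrom_iff.2 ?_
  rintro S (⟨b, rfl⟩ | ⟨b, rfl⟩) <;> obtain ⟨c, rfl⟩ := key b <;>
    rcases h with ⟨hp, hq⟩ | ⟨hp, hq⟩ <;> apply TopologicalSpace.isOpen_generateFrom_of_mem
  · left; refine ⟨c, ?_⟩
    ext x; simp [lexLT, hp.lt_iff_lt, hq.lt_iff_lt]
  · right; refine ⟨c, ?_⟩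
    ext x; simp [lexLT, hp.lt_iff_gt, hq.lt_iff_gt, eq_comm]
  · right; refine ⟨c, ?_⟩
    ext x; simp [lexLT, hp.lt_iff_lt, hq.lt_iff_lt]
  · left; refine ⟨c, ?_⟩
    ext x; simp [lexLT, hp.lt_iff_gt, hq.lt_iff_gt, eq_comm]

theorem homeo_mono_or_anti (p : 𝕀 ≃ₜ 𝕀) : StrictMono p ∨ StrictAnti p :=
  p.continuous.strictMono_of_inj p.injective

theorem lex_tendsto_aux (m : 𝕀) (t : 𝕀) :
    Filter.Tendsto (fun s : 𝕀 => (s, t)) (nhdsWithin m (Ioi m)) (@nhds _ lexTop (m, 1)) := by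
  refine TopologicalSpace.tendsto_nhds_generateFrom_iff.2 ?_
  rintro S (⟨a, rfl⟩ | ⟨a, rfl⟩) ha
  · filter_upwards [self_mem_nhdsWithin] with s hs
    left
    rcases ha with h | h
    · exact lt_trans h hs
    · rw [h.1]; exact hs
  · have : m < a.1 := by
      rcases ha with h | h
      · exact h
      · exact absurd h.2 (not_lt.2 unitInterval.le_one')
    filter_upwards [Ioo_mem_nhdsGT this] with s hs
    left
    exact hs.2

theorem lex_not_aux (p q : 𝕀 ≃ₜ 𝕀)
    (h : (StrictMono p ∧ StrictAnti q) ∨ (StrictAnti p ∧ StrictMono q)) :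
    ¬ @Continuous _ _ lexTop lexTop (fun st : 𝕀 × 𝕀 => (p st.1, q st.2)) := by
  intro hc
  have h0 : ((0 : 𝕀), (1 : 𝕀)).1 < 1 := zero_lt_one
  have hne : (nhdsWithin (0 : 𝕀) (Ioi 0)).NeBot := nhdsGT_neBot_of_exists_gt ⟨1, h0⟩
  have hT := lex_tendsto_aux 0 0
  rcases h with ⟨hp, hq⟩ | ⟨hp, hq⟩
  · have hO : @IsOpen _ lexTop {x | lexLT x (p 0, q 0)} :=
      TopologicalSpace.isOpen_generateFrom_of_mem (Or.inr ⟨_, rfl⟩)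
    have hV := @IsOpen.preimage _ _ lexTop lexTop _ hc _ hO
    have hm := hT (@IsOpen.mem_nhds _ lexTop _ _ hV (Or.inr ⟨rfl, hq h0⟩))
    obtain ⟨s, hs, hs'⟩ := (hne.nonempty_of_mem (Filter.inter_mem hm self_mem_nhdsWithin))
    have := hp hs'
    rcases hs with h | h
    · exact lt_asymm h this
    · exact this.ne' h.1
  · have hO : @IsOpen _ lexTop {x | lexLT (p 0, q 0) x} :=
      TopologicalSpace.isOpen_generateFrom_of_mem (Or.inl ⟨_, rfl⟩)
    have hV := @IsOpen.preimage _ _ lexTop lexTop _ hc _ hO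
    have hm := hT (@IsOpen.mem_nhds _ lexTop _ _ hV (Or.inr ⟨rfl, hq h0⟩))
    obtain ⟨s, hs, hs'⟩ := (hne.nonempty_of_mem (Filter.inter_mem hm self_mem_nhdsWithin))
    have := hp hs'
    rcases hs with h | h
    · exact lt_asymm h this
    · exact this.ne' h.1

theorem symm_mono {p : 𝕀 ≃ₜ 𝕀} (h : StrictMono p) : StrictMono p.symm := fun a b hab => by
  rw [← h.lt_iff_lt]; simpa using hab

theorem symm_anti {p : 𝕀 ≃ₜ 𝕀} (h : StrictAnti p) : StrictAnti p.symm := fun a b hab => by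
  rw [← h.lt_iff_gt]; simpa using hab

/-- For homeomorphisms `p q` of `[0,1]` (Euclidean topology), the product map
`(s,t) ↦ (p s, q t)` is a self-homeomorphism of the lexicographically ordered square
iff `p ∘ q` is order preserving (strictly increasing). -/
theorem lex_square_prodMap_homeomorph_iff (p q : 𝕀 ≃ₜ 𝕀) :
    (∃ 𝔥 : @Homeomorph (𝕀 × 𝕀) (𝕀 × 𝕀) lexTop lexTop,
        ⇑𝔥 = fun st : 𝕀 × 𝕀 => (p st.1, q st.2)) ↔
      StrictMono (⇑p ∘ ⇑q) := by
  have h01 : (0 : 𝕀) < 1 := zero_lt_one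
  constructor
  · rintro ⟨e, he⟩
    have hc : @Continuous _ _ lexTop lexTop (fun st : 𝕀 × 𝕀 => (p st.1, q st.2)) := by
      rw [← he]; exact @Homeomorph.continuous _ _ lexTop lexTop e
    rcases homeo_mono_or_anti p with hp | hp <;> rcases homeo_mono_or_anti q with hq | hq
    · exact hp.comp hq
    · exact absurd hc (lex_not_aux p q (Or.inl ⟨hp, hq⟩))
    · exact absurd hc (lex_not_aux p q (Or.inr ⟨hp, hq⟩))
    · exact hp.comp hq
  · intro h
    have H : (StrictMono p ∧ StrictMono q) ∨ (StrictAnti p ∧ StrictAnti q) := by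
      rcases homeo_mono_or_anti p with hp | hp <;> rcases homeo_mono_or_anti q with hq | hq
      · exact Or.inl ⟨hp, hq⟩
      · exact absurd (h h01) (lt_asymm (hp (hq h01)))
      · exact absurd (h h01) (lt_asymm (hp (hq h01)))
      · exact Or.inr ⟨hp, hq⟩
    have H' : (StrictMono p.symm ∧ StrictMono q.symm) ∨
        (StrictAnti p.symm ∧ StrictAnti q.symm) :=
      H.imp (fun h => ⟨symm_mono h.1, symm_mono h.2⟩) (fun h => ⟨symm_anti h.1, symm_anti h.2⟩)
    exact ⟨@Homeomorph.mk _ _ lexTop lexTop (p.toEquiv.prodCongr q.toEquiv)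
      (lex_cont_aux p q H) (lex_cont_aux p.symm q.symm H'), rfl⟩
end

section
/- Let 𝒢_𝔸 denote the group of all homeomorphisms of the Alexandroff square 𝔸 acting on 𝔸 by evaluation. The set of orbits {𝒢_𝔸·x : x ∈ 𝔸} equals the six-element family { {P₁,P₃}, {P₂,P₄}, L₁ ∪ L₃, L₂ ∪ L₄, Δ \ {P₁,P₃}, ((0,1)×(0,1)) \ Δ }. -/
open Set

/-- The unit interval `[0,1]` with its Euclidean (subspace) topology. -/
local notation "𝕀" => unitInterval

/-- The orbit of a point of the Alexandroff square under the full group of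
self-homeomorphisms. -/
def alexOrbit (x : 𝕀 × 𝕀) : Set (𝕀 × 𝕀) :=
  {y | ∃ g : @Homeomorph (𝕀 × 𝕀) (𝕀 × 𝕀) alexTop alexTop, g x = y}


def apt (x y : 𝕀) : ASq := ((x, y) : 𝕀 × 𝕀)
def fs (p : ASq) : 𝕀 := Prod.fst (α := 𝕀) (β := 𝕀) p
def sn (p : ASq) : 𝕀 := Prod.snd (α := 𝕀) (β := 𝕀) p

@[simp] lemma fs_apt (x y : 𝕀) : fs (apt x y) = x := rfl
@[simp] lemma sn_apt (x y : 𝕀) : sn (apt x y) = y := rfl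
@[simp] lemma apt_eta (p : ASq) : apt (fs p) (sn p) = p := rfl
lemma asq_ext {p q : ASq} (h1 : fs p = fs q) (h2 : sn p = sn q) : p = q := Prod.ext h1 h2

lemma band_eq (U F : Set 𝕀) : ({p : ASq | sn p ∈ U ∧ fs p ∉ F} : Set ASq) =
    ((univ : Set 𝕀) ×ˢ U) \ (F ×ˢ (univ : Set 𝕀)) := by
  ext p
  exact ⟨fun h => ⟨⟨trivial, h.1⟩, fun h' => h.2 h'.1⟩,
    fun h => ⟨h.1.2, fun h' => h.2 ⟨h', trivial⟩⟩⟩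

lemma basis_cases (S : Set ASq) (hS : S ∈ alexBasis) :
    (∃ (x : 𝕀) (U : Set 𝕀), IsOpen U ∧ x ∉ U ∧ S = {p : ASq | fs p = x ∧ sn p ∈ U}) ∨
    (∃ (U F : Set 𝕀), IsOpen U ∧ F.Finite ∧ S = {p : ASq | sn p ∈ U ∧ fs p ∉ F}) := by
  rcases hS with (⟨x, U, hU, hx, rfl⟩ | ⟨U, F, hU, hF, rfl⟩)
  · exact Or.inl ⟨x, U, hU, hx, rfl⟩
  · exact Or.inr ⟨U, F, hU, hF, (band_eq U F).symm⟩

lemma isOpen_col (x : 𝕀) (U : Set 𝕀) (hU : IsOpen U) (hx : x ∉ U) :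
    IsOpen {p : ASq | fs p = x ∧ sn p ∈ U} := by
  refine TopologicalSpace.isOpen_generateFrom_of_mem (Or.inl ⟨x, U, hU, hx, ?_⟩)
  ext p; rfl

lemma isOpen_band (U F : Set 𝕀) (hU : IsOpen U) (hF : F.Finite) :
    IsOpen {p : ASq | sn p ∈ U ∧ fs p ∉ F} := by
  refine TopologicalSpace.isOpen_generateFrom_of_mem (Or.inr ⟨U, F, hU, hF, ?_⟩)
  exact band_eq U F

lemma isOpen_ne_col (x : 𝕀) : IsOpen {p : ASq | fs p ≠ x} := by
  simpa using isOpen_band univ {x} isOpen_univ (finite_singleton x)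

lemma continuous_sn : Continuous sn := by
  refine ⟨fun U hU => ?_⟩
  convert isOpen_band U ∅ hU finite_empty using 1
  ext p; simp

lemma continuous_col (x : 𝕀) : Continuous (apt x) := by
  refine continuous_generateFrom_iff.2 ?_
  intro S hS
  rcases basis_cases S hS with (⟨x', U, hU, hx, rfl⟩ | ⟨U, F, hU, hF, rfl⟩)
  · by_cases h : x = x'
    · convert hU using 1
      ext y; simp [h]
    · convert isOpen_empty using 1
      ext y; simp [h]
  · by_cases h : x ∈ F
    · convert isOpen_empty using 1
      ext y; simp [h]
    · convert hU using 1
      ext y; simp [h]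

lemma continuous_dg : Continuous (fun x => apt x x) := by
  refine continuous_generateFrom_iff.2 ?_
  intro S hS
  rcases basis_cases S hS with (⟨x', U, hU, hx, rfl⟩ | ⟨U, F, hU, hF, rfl⟩)
  · convert isOpen_empty using 1
    ext y
    simp only [mem_empty_iff_false, iff_false]
    rintro ⟨h', h⟩
    have h' : y = x' := h'
    subst h'
    exact hx h
  · convert hU.sdiff hF.isClosed using 1
    ext y; simp

lemma finite_of_open (x : 𝕀) (O : Set ASq) (hO : IsOpen O) :
    apt x x ∈ O → {y | apt y x ∉ O}.Finite := by
  induction hO with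
  | basic S hS =>
    rintro hx
    rcases basis_cases S hS with (⟨x', U, hU, hx', rfl⟩ | ⟨U, F, hU, hF, rfl⟩)
    · obtain ⟨h', h⟩ := hx
      have h' : x = x' := h'
      subst h'
      exact absurd h hx'
    · refine hF.subset fun y hy => ?_
      by_contra h
      exact hy ⟨hx.1, h⟩
  | univ => intro _; simp
  | inter s t _ _ hs ht =>
    intro hx
    refine ((hs hx.1).union (ht hx.2)).subset fun y hy => ?_
    by_contra h
    simp only [mem_union, mem_ofPred_eq, not_or, not_not] at h
    exact hy ⟨h.1, h.2⟩
  | sUnion S _ ih =>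
    rintro ⟨s, hs, hx⟩
    refine (ih s hs hx).subset fun y hy h => hy ⟨s, hs, h⟩

def Dg : Set ASq := {p | fs p = sn p}

def LC (p : ASq) : Prop :=
  ∀ W : Set ASq, IsOpen W → p ∈ W → ∃ V ⊆ W, IsPreconnected V ∧ V ∈ nhds p

lemma LC_iff (p : ASq) : LC p ↔ p ∉ Dg := by
  constructor
  · intro h hp
    obtain ⟨x, rfl⟩ : ∃ x, p = apt x x := ⟨fs p, asq_ext rfl hp.symm⟩
    obtain ⟨U, hU, hxU, hinf⟩ : ∃ U : Set 𝕀, IsOpen U ∧ x ∈ U ∧ (Uᶜ).Infinite := by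
      rcases lt_or_ge x 1 with hx | hx
      · obtain ⟨c, h1, h2⟩ := exists_between hx
        refine ⟨Iio c, isOpen_Iio, h1, (Ioo_infinite h2).mono fun y hy => ?_⟩
        simpa using hy.1.le
      · obtain ⟨c, h1, h2⟩ := exists_between (lt_of_lt_of_le (zero_lt_one : (0 : 𝕀) < 1) hx)
        refine ⟨Ioi c, isOpen_Ioi, h2, (Ioo_infinite h1).mono fun y hy => ?_⟩
        simpa using hy.2.le
    obtain ⟨V, hVW, hV, hVn⟩ := h {p | sn p ∈ U} (hU.preimage continuous_sn) hxU
    obtain ⟨O, hOV, hO, hxO⟩ := mem_nhds_iff.1 hVn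
    have hfin := finite_of_open x O hO hxO
    obtain ⟨y, hyU, hyO⟩ := hinf.exists_notMem_finite hfin
    have hyV : apt y x ∈ V := hOV (not_not.1 hyO)
    obtain ⟨q, -, hq1, hq2⟩ := hV _ _ (isOpen_col y U hU hyU) (isOpen_ne_col y)
      (fun q hq => by
        by_cases hqy : fs q = y
        · exact Or.inl ⟨hqy, hVW hq⟩
        · exact Or.inr hqy)
      ⟨_, hyV, rfl, hxU⟩ ⟨apt x x, hOV hxO, fun hxy => hyU (by simp at hxy; rwa [← hxy])⟩
    exact hq2 hq1.1
  · intro hp W hW hpW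
    have h1 : apt (fs p) ⁻¹' W ∩ {fs p}ᶜ ∈ nhds (sn p) :=
      ((hW.preimage (continuous_col _)).inter isOpen_compl_singleton).mem_nhds
        ⟨hpW, fun h => hp (Eq.symm h)⟩
    obtain ⟨b, c, hb, hn, hs⟩ := exists_Icc_mem_subset_of_mem_nhds h1
    refine ⟨apt (fs p) '' Icc b c, ?_,
      isPreconnected_Icc.image _ (continuous_col _).continuousOn, ?_⟩
    · rintro _ ⟨y, hy, rfl⟩
      exact (hs hy).1
    · refine mem_nhds_iff.2 ⟨_, ?_, isOpen_col (fs p) (interior (Icc b c)) isOpen_interior ?_, ?_⟩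
      · rintro q ⟨hq1, hq2⟩
        exact ⟨sn q, interior_subset hq2, asq_ext hq1.symm rfl⟩
      · intro h
        exact (hs (interior_subset h)).2 rfl
      · exact ⟨rfl, mem_interior_iff_mem_nhds.2 hn⟩

lemma LC_map (g : ASq ≃ₜ ASq) (p : ASq) (h : LC p) : LC (g p) := by
  intro W hW hp
  obtain ⟨V, hVW, hV, hn⟩ := h (g ⁻¹' W) (hW.preimage g.continuous) hp
  exact ⟨g '' V, by simpa using hVW, hV.image _ g.continuous.continuousOn,
    g.isOpenMap.image_mem_nhds hn⟩

/-- Upgrade a one-way invariance under all homeomorphisms to an equivalence. -/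
lemma inv_iff {Q : ASq → Prop} (h : ∀ (g : ASq ≃ₜ ASq) p, Q p → Q (g p)) (g : ASq ≃ₜ ASq)
    (p : ASq) : Q (g p) ↔ Q p :=
  ⟨fun hq => by simpa using h g.symm _ hq, h g p⟩

lemma Dg_inv (g : ASq ≃ₜ ASq) (p : ASq) : g p ∈ Dg ↔ p ∈ Dg := by
  have := inv_iff LC_map g p
  rw [LC_iff, LC_iff] at this
  exact not_iff_not.1 this

lemma isPreconnected_Dg : IsPreconnected Dg := by
  have : Dg = (fun x => apt x x) '' univ := by
    ext p
    constructor
    · intro h; exact ⟨fs p, trivial, asq_ext rfl h⟩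
    · rintro ⟨x, -, rfl⟩; rfl
  rw [this]
  exact isPreconnected_univ.image _ continuous_dg.continuousOn

def isC (p : ASq) : Prop := fs p = 0 ∨ fs p = 1
def isE (p : ASq) : Prop := sn p = 0 ∨ sn p = 1

lemma Dg_cut (x : 𝕀) : IsPreconnected (Dg \ {apt x x}) ↔ (x = 0 ∨ x = 1) := by
  have himg : Dg \ {apt x x} = (fun x => apt x x) '' {x}ᶜ := by
    ext p
    constructor
    · rintro ⟨h, h2⟩
      refine ⟨fs p, fun h3 => h2 ?_, asq_ext rfl h⟩
      have h3 : fs p = x := h3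
      exact asq_ext h3 (h.symm.trans h3)
    · rintro ⟨y, hy, rfl⟩
      exact ⟨rfl, fun h => hy (congrArg fs h)⟩
  constructor
  · intro h
    have h2 := h.image sn continuous_sn.continuousOn
    rw [himg, image_image] at h2
    simp only [sn_apt, image_id'] at h2
    by_contra hx
    push Not at hx
    have := h2.ordConnected.out (x := 0) (y := 1) (by simpa using hx.1.symm)
      (by simpa using hx.2.symm) (show x ∈ Icc 0 1 from ⟨unitInterval.nonneg', unitInterval.le_one'⟩)
    exact this rfl
  · intro hx
    rw [himg]
    refine IsPreconnected.image ?_ _ continuous_dg.continuousOn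
    rcases hx with rfl | rfl
    · have : ({0}ᶜ : Set 𝕀) = Ioi 0 := by
        ext y; simp [unitInterval.pos_iff_ne_zero]
      rw [this]; exact isPreconnected_Ioi
    · have : ({1}ᶜ : Set 𝕀) = Iio 1 := by
        ext y; simp [unitInterval.lt_one_iff_ne_one]
      rw [this]; exact isPreconnected_Iio

lemma image_Dg_diff (g : ASq ≃ₜ ASq) (p : ASq) : g '' (Dg \ {p}) = Dg \ {g p} := by
  ext q
  constructor
  · rintro ⟨r, ⟨h1, h2⟩, rfl⟩
    exact ⟨(Dg_inv g r).2 h1, fun h => h2 (g.injective h)⟩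
  · rintro ⟨h1, h2⟩
    refine ⟨g.symm q, ⟨(Dg_inv g.symm q).2 h1, fun h => h2 ?_⟩, by simp⟩
    have h : g.symm q = p := h
    simp [← h]

def Rc (p q : ASq) : Prop := ∃ S : Set ASq, IsPreconnected S ∧ p ∈ S ∧ S ∩ Dg = {q}

lemma Rc_iff (p q : ASq) : Rc p q ↔ q = apt (fs p) (fs p) := by
  constructor
  · rintro ⟨S, hS, hp, hq⟩
    have hq' : q ∈ S ∩ Dg := by rw [hq]; rfl
    by_contra hne
    have hx : apt (fs p) (fs p) ∉ S := by
      intro h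
      have : apt (fs p) (fs p) ∈ S ∩ Dg := ⟨h, rfl⟩
      rw [hq] at this
      exact hne this.symm
    have hnd : ∀ r ∈ S, fs r = fs p → sn r ∈ ({fs p}ᶜ : Set 𝕀) := by
      intro r hr h1 h2
      apply hx
      have h2 : sn r = fs p := h2
      have : r = apt (fs p) (fs p) := asq_ext h1 h2
      rwa [← this]
    obtain ⟨r, -, h1, h2⟩ := hS _ _ (isOpen_col (fs p) {fs p}ᶜ isOpen_compl_singleton (by simp))
      (isOpen_ne_col (fs p))
      (fun r hr => by
        by_cases h : fs r = fs p
        · exact Or.inl ⟨h, hnd r hr h⟩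
        · exact Or.inr h)
      ⟨p, hp, rfl, hnd p hp rfl⟩ ⟨q, hq'.1, fun h => hne (asq_ext h (hq'.2.symm.trans h))⟩
    exact h2 h1.1
  · rintro rfl
    refine ⟨apt (fs p) '' uIcc (fs p) (sn p),
      isPreconnected_uIcc.image _ (continuous_col _).continuousOn, ⟨sn p, by simp, rfl⟩, ?_⟩
    ext q
    constructor
    · rintro ⟨⟨y, hy, rfl⟩, h⟩
      have h : fs p = y := h
      rw [← h]; rfl
    · rintro rfl
      exact ⟨⟨fs p, by simp, rfl⟩, rfl⟩

lemma Rc_map (g : ASq ≃ₜ ASq) (p q : ASq) (h : Rc p q) : Rc (g p) (g q) := by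
  obtain ⟨S, hS, hp, hq⟩ := h
  refine ⟨g '' S, hS.image _ g.continuous.continuousOn, ⟨p, hp, rfl⟩, ?_⟩
  have : g '' S ∩ Dg = g '' (S ∩ Dg) := by
    ext r
    constructor
    · rintro ⟨⟨s, hs, rfl⟩, h⟩
      exact ⟨s, ⟨hs, (Dg_inv g s).1 h⟩, rfl⟩
    · rintro ⟨s, ⟨hs, h⟩, rfl⟩
      exact ⟨⟨s, hs, rfl⟩, (Dg_inv g s).2 h⟩
  rw [this, hq, image_singleton]

lemma isC_inv (g : ASq ≃ₜ ASq) (p : ASq) : isC (g p) ↔ isC p := by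
  refine inv_iff (fun g p h => ?_) g p
  have h1 := Rc_map g p _ ((Rc_iff p _).2 rfl)
  rw [Rc_iff] at h1
  have h2 := ((Dg_cut (fs p)).2 h).image g g.continuous.continuousOn
  rw [image_Dg_diff, h1, Dg_cut] at h2
  exact h2

lemma cut_iff (p : ASq) (hp : p ∉ Dg) : IsPreconnected ({p}ᶜ : Set ASq) ↔ isE p := by
  have hne : sn p ≠ fs p := fun h => hp h.symm
  constructor
  · intro h
    by_contra hE
    simp only [isE, not_or] at hE
    have h0 : 0 < sn p := unitInterval.pos_iff_ne_zero.2 hE.1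
    have h1 : sn p < 1 := unitInterval.lt_one_iff_ne_one.2 hE.2
    -- a general splitting lemma
    have key : ∀ (U V : Set 𝕀) (e : 𝕀), IsOpen U → IsOpen V → fs p ∈ V → Disjoint U V →
        e ∈ U → sn p ∉ U → (∀ y, y ≠ sn p → y ∈ U ∨ y ∈ V) → False := by
      intro U V e hU hV hxV hd he hpU hcov
      obtain ⟨r, -, h2, h3⟩ := h _ _
        (isOpen_col (fs p) U hU (fun h => hd.le_bot ⟨h, hxV⟩))
        ((isOpen_ne_col (fs p)).union (hV.preimage continuous_sn))
        (fun r hr => by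
          by_cases hrp : fs r = fs p
          · rcases hcov (sn r) (fun h => hr (asq_ext hrp h)) with h | h
            · exact Or.inl ⟨hrp, h⟩
            · exact Or.inr (Or.inr h)
          · exact Or.inr (Or.inl hrp))
        ⟨apt (fs p) e, fun h => hpU (by rw [← (congrArg sn h : e = sn p)]; exact he), rfl, he⟩
        ⟨apt (fs p) (fs p), fun h => hne (congrArg sn h).symm, Or.inr hxV⟩
      rcases h3 with h3 | h3
      · exact h3 h2.1
      · exact hd.le_bot ⟨h2.2, h3⟩
    rcases lt_or_gt_of_ne hne with hlt | hgt
    · refine key (Iio (sn p)) (Ioi (sn p)) 0 isOpen_Iio isOpen_Ioi hlt ?_ h0 (by simp)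
        (fun y hy => lt_or_gt_of_ne hy)
      exact Set.disjoint_left.2 fun y (h1 : y < sn p) (h2 : sn p < y) => lt_asymm h1 h2
    · refine key (Ioi (sn p)) (Iio (sn p)) 1 isOpen_Ioi isOpen_Iio hgt ?_ h1 (by simp)
        (fun y hy => (lt_or_gt_of_ne hy).symm)
      exact Set.disjoint_left.2 fun y (h1 : sn p < y) (h2 : y < sn p) => lt_asymm h1 h2
  · intro hE
    refine isPreconnected_of_forall (apt 0 0) fun q hq => ?_
    refine ⟨apt (fs q) '' uIcc (sn q) (fs q) ∪ Dg, ?_, Or.inr rfl, Or.inl ⟨sn q, by simp, rfl⟩, ?_⟩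
    · rintro r (⟨y, hy, rfl⟩ | hr) hrp
      · have hrp : apt (fs q) y = p := hrp
        have hx : fs q = fs p := by rw [← hrp]; rfl
        have hy' : y = sn p := by rw [← hrp]; rfl
        have hqs : sn q ≠ sn p := fun h => hq (asq_ext hx h)
        rw [hx, hy', mem_uIcc] at hy
        rcases hE with h | h
        · rw [h] at hy hqs hne
          rcases hy with hy | hy
          · exact hqs (le_antisymm hy.1 unitInterval.nonneg')
          · exact hne (le_antisymm hy.1 unitInterval.nonneg').symm
        · rw [h] at hy hqs hne
          rcases hy with hy | hy
          · exact hne (le_antisymm hy.2 unitInterval.le_one')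
          · exact hqs (le_antisymm unitInterval.le_one' hy.2)
      · have hrp : r = p := hrp
        exact hp (hrp ▸ hr)
    · exact IsPreconnected.union (apt (fs q) (fs q)) ⟨fs q, by simp, rfl⟩ rfl
        (isPreconnected_uIcc.image _ (continuous_col _).continuousOn) isPreconnected_Dg

lemma isE_inv (g : ASq ≃ₜ ASq) (p : ASq) (hp : p ∉ Dg) : isE (g p) ↔ isE p := by
  have := inv_iff (Q := fun p => p ∉ Dg ∧ isE p) (fun g p h => ?_) g p
  · simpa [hp, Dg_inv] using this
  · have hg : g p ∉ Dg := fun h' => h.1 ((Dg_inv g p).1 h')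
    refine ⟨hg, ?_⟩
    have h2 := ((cut_iff p h.1).2 h.2).image g g.continuous.continuousOn
    rw [image_compl_eq g.bijective, image_singleton] at h2 
    exact (cut_iff _ hg).1 h2

/-! ### Transitivity -/

def ARel (p q : ASq) : Prop := ∃ g : ASq ≃ₜ ASq, g p = q

lemma ARel.refl (p : ASq) : ARel p p := ⟨Homeomorph.refl _, rfl⟩
lemma ARel.symm {p q : ASq} : ARel p q → ARel q p := by
  rintro ⟨g, rfl⟩; exact ⟨g.symm, by simp⟩
lemma ARel.trans {p q r : ASq} : ARel p q → ARel q r → ARel p r := by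
  rintro ⟨g, rfl⟩ ⟨h, rfl⟩; exact ⟨g.trans h, by simp⟩

lemma continuous_hh (h : 𝕀 ≃ₜ 𝕀) : Continuous (fun p : ASq => apt (h (fs p)) (h (sn p))) := by
  refine continuous_generateFrom_iff.2 ?_
  intro S hS
  rcases basis_cases S hS with (⟨x', U, hU, hx, rfl⟩ | ⟨U, F, hU, hF, rfl⟩)
  · convert isOpen_col (h.symm x') (h ⁻¹' U) (hU.preimage h.continuous) (by simpa using hx) using 1
    ext p
    simp [Homeomorph.eq_symm_apply]
  · convert isOpen_band (h ⁻¹' U) (h ⁻¹' F) (hU.preimage h.continuous)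
      (hF.preimage h.injective.injOn) using 1
    ext p
    simp

lemma Rel_hh (h : 𝕀 ≃ₜ 𝕀) (x y : 𝕀) : ARel (apt x y) (apt (h x) (h y)) := by
  refine ⟨{ toFun := fun p => apt (h (fs p)) (h (sn p))
            invFun := fun p => apt (h.symm (fs p)) (h.symm (sn p))
            left_inv := fun p => by simp
            right_inv := fun p => by simp
            continuous_toFun := continuous_hh h
            continuous_invFun := continuous_hh h.symm }, rfl⟩

lemma Rel_flip (x y : 𝕀) : ARel (apt x y) (apt (unitInterval.symm x) (unitInterval.symm y)) :=
  Rel_hh unitInterval.symmHomeomorph x y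

noncomputable def pl (a b a' b' x : ℝ) : ℝ :=
  if x ≤ a then x * (a' / a) else if x ≤ b then a' + (x - a) * ((b' - a') / (b - a))
  else b' + (x - b) * ((1 - b') / (1 - b))

lemma pl_strictMono {a b a' b' : ℝ} (h0 : 0 < a) (h1 : a < b) (h2 : b < 1)
    (h0' : 0 < a') (h1' : a' < b') (h2' : b' < 1) : StrictMono (pl a b a' b') := by
  have s1 : 0 < a' / a := by positivity
  have s2 : 0 < (b' - a') / (b - a) := div_pos (by linarith) (by linarith)
  have s3 : 0 < (1 - b') / (1 - b) := div_pos (by linarith) (by linarith)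
  have e1 : a * (a' / a) = a' := by field_simp
  have e2 : (b - a) * ((b' - a') / (b - a)) = b' - a' := by
    have : b - a ≠ 0 := by linarith
    field_simp
  intro x y hxy
  unfold pl
  generalize a' / a = s at *
  generalize (b' - a') / (b - a) = t at *
  generalize (1 - b') / (1 - b) = u at *
  split_ifs <;> nlinarith

lemma pl_inv {a b a' b' : ℝ} (h0 : 0 < a) (h1 : a < b) (h2 : b < 1)
    (h0' : 0 < a') (h1' : a' < b') (h2' : b' < 1) (x : ℝ) :
    pl a' b' a b (pl a b a' b' x) = x := by
  have hm := pl_strictMono h0 h1 h2 h0' h1' h2'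
  have n1 : b - a ≠ 0 := by linarith
  have n2 : b' - a' ≠ 0 := by linarith
  have n3 : 1 - b ≠ 0 := by linarith
  have n4 : 1 - b' ≠ 0 := by linarith
  have ea : pl a b a' b' a = a' := by simp [pl]; field_simp
  have eb : pl a b a' b' b = b' := by
    simp only [pl, not_le.2 h1, if_false, le_refl, if_true]; field_simp; ring
  have i1 : pl a b a' b' x ≤ a' ↔ x ≤ a := by rw [← hm.le_iff_le (a := x), ea]
  have i2 : pl a b a' b' x ≤ b' ↔ x ≤ b := by rw [← hm.le_iff_le (a := x), eb]
  rw [pl]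
  simp only [i1, i2]
  unfold pl
  split_ifs
  · field_simp
  · field_simp; ring
  · field_simp; ring

lemma pl_mem {a b a' b' : ℝ} (h0 : 0 < a) (h1 : a < b) (h2 : b < 1)
    (h0' : 0 < a') (h1' : a' < b') (h2' : b' < 1) (x : 𝕀) :
    pl a b a' b' x ∈ unitInterval := by
  have hm := (pl_strictMono h0 h1 h2 h0' h1' h2').monotone
  have n3 : 1 - b ≠ 0 := by linarith
  have e0 : pl a b a' b' 0 = 0 := by simp [pl, h0.le]
  have e1 : pl a b a' b' 1 = 1 := by
    simp only [pl, not_le.2 h2, not_le.2 (h1.trans h2), if_false]; field_simp; ring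
  exact ⟨e0 ▸ hm x.2.1, (hm x.2.2).trans e1.le⟩

lemma two_pt {a b a' b' : 𝕀} (h0 : 0 < a) (h1 : a < b) (h2 : b < 1)
    (h0' : 0 < a') (h1' : a' < b') (h2' : b' < 1) :
    ∃ h : 𝕀 ≃ₜ 𝕀, h 0 = 0 ∧ h 1 = 1 ∧ h a = a' ∧ h b = b' := by
  have k0 : (0 : ℝ) < a := h0
  have k1 : (a : ℝ) < b := h1
  have k2 : (b : ℝ) < 1 := h2
  have k0' : (0 : ℝ) < a' := h0'
  have k1' : (a' : ℝ) < b' := h1'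
  have k2' : (b' : ℝ) < 1 := h2'
  have n1 : (b : ℝ) - a ≠ 0 := by linarith
  let e : 𝕀 ≃o 𝕀 :=
    { toFun := fun x => ⟨pl a b a' b' x, pl_mem k0 k1 k2 k0' k1' k2' x⟩
      invFun := fun x => ⟨pl a' b' a b x, pl_mem k0' k1' k2' k0 k1 k2 x⟩
      left_inv := fun x => Subtype.ext (pl_inv k0 k1 k2 k0' k1' k2' x)
      right_inv := fun x => Subtype.ext (pl_inv k0' k1' k2' k0 k1 k2 x)
      map_rel_iff' := fun {x y} => (pl_strictMono k0 k1 k2 k0' k1' k2').le_iff_le }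
  refine ⟨e.toHomeomorph, e.map_bot, e.map_top, ?_, ?_⟩
  · refine Subtype.ext ?_
    change pl a b a' b' a = a'
    simp [pl]; field_simp
  · refine Subtype.ext ?_
    change pl a b a' b' b = b'
    simp only [pl, not_le.2 k1, if_false, le_refl, if_true]; field_simp; ring

lemma one_pt {a a' : 𝕀} (h0 : 0 < a) (h1 : a < 1) (h0' : 0 < a') (h1' : a' < 1) :
    ∃ h : 𝕀 ≃ₜ 𝕀, h 0 = 0 ∧ h 1 = 1 ∧ h a = a' := by
  obtain ⟨b, hb, hb1⟩ := exists_between h1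
  obtain ⟨b', hb', hb1'⟩ := exists_between h1'
  obtain ⟨h, e0, e1, e2, -⟩ := two_pt h0 hb hb1 h0' hb' hb1'
  exact ⟨h, e0, e1, e2⟩

lemma orbit_eq (S T : Set ASq) (hinv : ∀ (g : ASq ≃ₜ ASq), ∀ p ∈ S, g p ∈ S)
    (hT : ∀ p ∈ S, ∃ t ∈ T, ARel p t) (htr : ∀ t ∈ T, ∀ t' ∈ T, ARel t t') (p : ASq) (hp : p ∈ S) :
    alexOrbit p = S := by
  ext q
  constructor
  · rintro ⟨g, rfl⟩
    exact hinv g p hp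
  · intro hq
    obtain ⟨t, ht, h1⟩ := hT p hp
    obtain ⟨t', ht', h2⟩ := hT q hq
    exact (h1.trans (htr t ht t' ht')).trans h2.symm

/-! ### The six classes -/

lemma Ioo_iff (x : 𝕀) : (0 < x ∧ x < 1) ↔ ¬ (x = 0 ∨ x = 1) := by
  rw [unitInterval.pos_iff_ne_zero, unitInterval.lt_one_iff_ne_one, not_or]

lemma asq_eq_iff (p : ASq) (x y : 𝕀) : p = apt x y ↔ fs p = x ∧ sn p = y :=
  ⟨by rintro rfl; exact ⟨rfl, rfl⟩, fun h => asq_ext h.1 h.2⟩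

def C1 : Set ASq := {p | p ∈ Dg ∧ isC p}
def C2 : Set ASq := {p | p ∉ Dg ∧ isC p ∧ isE p}
def C3 : Set ASq := {p | p ∉ Dg ∧ isC p ∧ ¬ isE p}
def C4 : Set ASq := {p | p ∉ Dg ∧ ¬ isC p ∧ isE p}
def C5 : Set ASq := {p | p ∈ Dg ∧ ¬ isC p}
def C6 : Set ASq := {p | p ∉ Dg ∧ ¬ isC p ∧ ¬ isE p}

set_option linter.unusedSimpArgs false
set_option linter.unusedTactic false

lemma C1_eq : C1 = ({P₁, P₃} : Set (𝕀 × 𝕀)) := by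
  refine Set.ext (α := 𝕀 × 𝕀) ?_
  rintro ⟨x, y⟩
  change (x = y ∧ (x = 0 ∨ x = 1)) ↔ ((x, y) : 𝕀 × 𝕀) ∈ ({P₁, P₃} : Set (𝕀 × 𝕀))
  have := zero_ne_one (α := 𝕀)
  simp only [P₁, P₂, P₃, P₄, L₁, L₂, L₃, L₄, diag, mem_ofPred_eq, mem_union, mem_sdiff, mem_prod,
    mem_Ioo, Ioo_iff, mem_insert_iff, mem_singleton_iff, Prod.mk.injEq]
  grind

lemma C2_eq : C2 = ({P₂, P₄} : Set (𝕀 × 𝕀)) := by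
  refine Set.ext (α := 𝕀 × 𝕀) ?_
  rintro ⟨x, y⟩
  change (¬ (x = y) ∧ (x = 0 ∨ x = 1) ∧ (y = 0 ∨ y = 1)) ↔ ((x, y) : 𝕀 × 𝕀) ∈ ({P₂, P₄} : Set (𝕀 × 𝕀))
  have := zero_ne_one (α := 𝕀)
  simp only [P₁, P₂, P₃, P₄, L₁, L₂, L₃, L₄, diag, mem_ofPred_eq, mem_union, mem_sdiff, mem_prod,
    mem_Ioo, Ioo_iff, mem_insert_iff, mem_singleton_iff, Prod.mk.injEq]
  grind

lemma C3_eq : C3 = L₁ ∪ L₃ := by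
  refine Set.ext (α := 𝕀 × 𝕀) ?_
  rintro ⟨x, y⟩
  change (¬ (x = y) ∧ (x = 0 ∨ x = 1) ∧ ¬ (y = 0 ∨ y = 1)) ↔ ((x, y) : 𝕀 × 𝕀) ∈ L₁ ∪ L₃
  have := zero_ne_one (α := 𝕀)
  simp only [P₁, P₂, P₃, P₄, L₁, L₂, L₃, L₄, diag, mem_ofPred_eq, mem_union, mem_sdiff, mem_prod,
    mem_Ioo, Ioo_iff, mem_insert_iff, mem_singleton_iff, Prod.mk.injEq]
  grind

lemma C4_eq : C4 = L₂ ∪ L₄ := by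
  refine Set.ext (α := 𝕀 × 𝕀) ?_
  rintro ⟨x, y⟩
  change (¬ (x = y) ∧ ¬ (x = 0 ∨ x = 1) ∧ (y = 0 ∨ y = 1)) ↔ ((x, y) : 𝕀 × 𝕀) ∈ L₂ ∪ L₄
  have := zero_ne_one (α := 𝕀)
  simp only [P₁, P₂, P₃, P₄, L₁, L₂, L₃, L₄, diag, mem_ofPred_eq, mem_union, mem_sdiff, mem_prod,
    mem_Ioo, Ioo_iff, mem_insert_iff, mem_singleton_iff, Prod.mk.injEq]
  grind

lemma C5_eq : C5 = diag \ {P₁, P₃} := by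
  refine Set.ext (α := 𝕀 × 𝕀) ?_
  rintro ⟨x, y⟩
  change (x = y ∧ ¬ (x = 0 ∨ x = 1)) ↔ ((x, y) : 𝕀 × 𝕀) ∈ diag \ {P₁, P₃}
  have := zero_ne_one (α := 𝕀)
  simp only [P₁, P₂, P₃, P₄, L₁, L₂, L₃, L₄, diag, mem_ofPred_eq, mem_union, mem_sdiff, mem_prod,
    mem_Ioo, Ioo_iff, mem_insert_iff, mem_singleton_iff, Prod.mk.injEq]
  grind

lemma C6_eq : C6 = ((Ioo (0 : 𝕀) 1) ×ˢ (Ioo (0 : 𝕀) 1)) \ diag := by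
  refine Set.ext (α := 𝕀 × 𝕀) ?_
  rintro ⟨x, y⟩
  change (¬ (x = y) ∧ ¬ (x = 0 ∨ x = 1) ∧ ¬ (y = 0 ∨ y = 1)) ↔ ((x, y) : 𝕀 × 𝕀) ∈ ((Ioo (0 : 𝕀) 1) ×ˢ (Ioo (0 : 𝕀) 1)) \ diag
  have := zero_ne_one (α := 𝕀)
  simp only [P₁, P₂, P₃, P₄, L₁, L₂, L₃, L₄, diag, mem_ofPred_eq, mem_union, mem_sdiff, mem_prod,
    mem_Ioo, Ioo_iff, mem_insert_iff, mem_singleton_iff, Prod.mk.injEq]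
  grind

lemma orb1 (p : ASq) (hp : p ∈ C1) : alexOrbit p = C1 := by
  refine orbit_eq C1 {apt 0 0} (fun g p h => ⟨(Dg_inv g p).2 h.1, (isC_inv g p).2 h.2⟩) ?_ ?_ p hp
  · rintro q ⟨h1, h2⟩
    have h1 : fs q = sn q := h1
    refine ⟨_, rfl, ?_⟩
    rcases h2 with h | h
    · rw [(asq_eq_iff q 0 0).2 ⟨h, h1 ▸ h⟩]; exact ARel.refl _
    · rw [(asq_eq_iff q 1 1).2 ⟨h, h1 ▸ h⟩]; simpa using Rel_flip 1 1
  · rintro _ rfl _ rfl; exact ARel.refl _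

lemma inv3 {p : ASq} (g : ASq ≃ₜ ASq) (hp : p ∉ Dg) :
    g p ∉ Dg ∧ (isC (g p) ↔ isC p) ∧ (isE (g p) ↔ isE p) :=
  ⟨fun h => hp ((Dg_inv g p).1 h), isC_inv g p, isE_inv g p hp⟩

lemma orb2 (p : ASq) (hp : p ∈ C2) : alexOrbit p = C2 := by
  refine orbit_eq C2 {apt 0 1} (fun g p h => ?_) ?_ ?_ p hp
  · obtain ⟨a, b, c⟩ := inv3 g h.1
    exact ⟨a, b.2 h.2.1, c.2 h.2.2⟩
  · rintro q hq
    refine ⟨_, rfl, ?_⟩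
    rw [C2_eq] at hq
    rcases hq with rfl | rfl
    · exact ARel.refl _
    · have := Rel_flip 1 0
      simp only [unitInterval.symm_one, unitInterval.symm_zero] at this
      exact this
  · rintro _ rfl _ rfl; exact ARel.refl _

lemma orb3 (p : ASq) (hp : p ∈ C3) : alexOrbit p = C3 := by
  refine orbit_eq C3 {q | ∃ t, 0 < t ∧ t < 1 ∧ q = apt 0 t} (fun g p h => ?_) ?_ ?_ p hp
  · obtain ⟨a, b, c⟩ := inv3 g h.1
    exact ⟨a, b.2 h.2.1, fun h' => h.2.2 (c.1 h')⟩
  · rintro q ⟨-, h1, h2⟩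
    obtain ⟨ha, hb⟩ := (Ioo_iff (sn q)).2 h2
    rcases h1 with h | h
    · exact ⟨q, ⟨sn q, ha, hb, asq_ext h rfl⟩, ARel.refl _⟩
    · refine ⟨apt 0 (unitInterval.symm (sn q)), ⟨_, ?_, ?_, rfl⟩, ?_⟩
      · simpa [unitInterval.pos_iff_ne_zero, unitInterval.symm_eq_zero] using hb.ne
      · simpa [unitInterval.lt_one_iff_ne_one, unitInterval.symm_eq_one] using ha.ne'
      · have := Rel_flip (fs q) (sn q)
        rw [apt_eta, h] at this
        simpa using this
  · rintro _ ⟨t, h0, h1, rfl⟩ _ ⟨t', h0', h1', rfl⟩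
    obtain ⟨h, e0, e1, e2⟩ := one_pt h0 h1 h0' h1'
    simpa [e0, e1, e2] using Rel_hh h 0 t

lemma orb4 (p : ASq) (hp : p ∈ C4) : alexOrbit p = C4 := by
  refine orbit_eq C4 {q | ∃ t, 0 < t ∧ t < 1 ∧ q = apt t 0} (fun g p h => ?_) ?_ ?_ p hp
  · obtain ⟨a, b, c⟩ := inv3 g h.1
    exact ⟨a, fun h' => h.2.1 (b.1 h'), c.2 h.2.2⟩
  · rintro q ⟨-, h2, h1⟩
    obtain ⟨ha, hb⟩ := (Ioo_iff (fs q)).2 h2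
    rcases h1 with h | h
    · exact ⟨q, ⟨fs q, ha, hb, asq_ext rfl h⟩, ARel.refl _⟩
    · refine ⟨apt (unitInterval.symm (fs q)) 0, ⟨_, ?_, ?_, rfl⟩, ?_⟩
      · simpa [unitInterval.pos_iff_ne_zero, unitInterval.symm_eq_zero] using hb.ne
      · simpa [unitInterval.lt_one_iff_ne_one, unitInterval.symm_eq_one] using ha.ne'
      · have := Rel_flip (fs q) (sn q)
        rw [apt_eta, h] at this
        simpa using this
  · rintro _ ⟨t, h0, h1, rfl⟩ _ ⟨t', h0', h1', rfl⟩
    obtain ⟨h, e0, e1, e2⟩ := one_pt h0 h1 h0' h1'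
    simpa [e0, e1, e2] using Rel_hh h t 0

lemma orb5 (p : ASq) (hp : p ∈ C5) : alexOrbit p = C5 := by
  refine orbit_eq C5 {q | ∃ t, 0 < t ∧ t < 1 ∧ q = apt t t}
    (fun g p h => ⟨(Dg_inv g p).2 h.1, fun h' => h.2 ((isC_inv g p).1 h')⟩) ?_ ?_ p hp
  · rintro q ⟨h1, h2⟩
    obtain ⟨ha, hb⟩ := (Ioo_iff (fs q)).2 h2
    exact ⟨q, ⟨fs q, ha, hb, asq_ext rfl (Eq.symm h1)⟩, ARel.refl _⟩
  · rintro _ ⟨t, h0, h1, rfl⟩ _ ⟨t', h0', h1', rfl⟩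
    obtain ⟨h, e0, e1, e2⟩ := one_pt h0 h1 h0' h1'
    simpa [e2] using Rel_hh h t t

lemma orb6 (p : ASq) (hp : p ∈ C6) : alexOrbit p = C6 := by
  refine orbit_eq C6 {q | ∃ a b, 0 < a ∧ a < b ∧ b < 1 ∧ q = apt a b} (fun g p h => ?_) ?_ ?_ p hp
  · obtain ⟨a, b, c⟩ := inv3 g h.1
    exact ⟨a, fun h' => h.2.1 (b.1 h'), fun h' => h.2.2 (c.1 h')⟩
  · rintro q ⟨h0, h1, h2⟩
    obtain ⟨ha, hb⟩ := (Ioo_iff (fs q)).2 h1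
    obtain ⟨hc, hd⟩ := (Ioo_iff (sn q)).2 h2
    rcases lt_or_gt_of_ne (show fs q ≠ sn q from h0) with h | h
    · exact ⟨q, ⟨fs q, sn q, ha, h, hd, rfl⟩, ARel.refl _⟩
    · refine ⟨_, ⟨_, _, ?_, ?_, ?_, rfl⟩, Rel_flip (fs q) (sn q)⟩
      · simpa [unitInterval.pos_iff_ne_zero, unitInterval.symm_eq_zero] using hb.ne
      · simpa using h
      · simpa [unitInterval.lt_one_iff_ne_one, unitInterval.symm_eq_one] using hc.ne'
  · rintro _ ⟨a, b, h0, h1, h2, rfl⟩ _ ⟨a', b', h0', h1', h2', rfl⟩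
    obtain ⟨h, e0, e1, e2, e3⟩ := two_pt h0 h1 h2 h0' h1' h2'
    simpa [e2, e3] using Rel_hh h a b

theorem alexandroff_orbit_space :
    {S | ∃ x : 𝕀 × 𝕀, S = alexOrbit x} =
      ({{P₁, P₃}, {P₂, P₄}, L₁ ∪ L₃, L₂ ∪ L₄, diag \ {P₁, P₃},
        ((Ioo (0 : 𝕀) 1) ×ˢ (Ioo (0 : 𝕀) 1)) \ diag} : Set (Set (𝕀 × 𝕀))) := by
  rw [← C5_eq, ← C6_eq, ← C1_eq, ← C2_eq, ← C3_eq, ← C4_eq]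
  obtain ⟨a, ha, hc⟩ := exists_between (zero_lt_one : (0 : 𝕀) < 1)
  obtain ⟨b, hb, hd⟩ := exists_between hc
  have hb0 := ha.trans hb
  have n1 : ¬ (a = 0 ∨ a = 1) := (Ioo_iff a).1 ⟨ha, hc⟩
  have n2 : ¬ (b = 0 ∨ b = 1) := (Ioo_iff b).1 ⟨hb0, hd⟩
  ext S
  constructor
  · rintro ⟨x, rfl⟩
    by_cases h1 : (x : ASq) ∈ Dg <;> by_cases h2 : isC x <;> by_cases h3 : isE x
    · exact Or.inl (orb1 x ⟨h1, h2⟩)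
    · exact Or.inl (orb1 x ⟨h1, h2⟩)
    · exact Or.inr (Or.inr (Or.inr (Or.inr (Or.inl (orb5 x ⟨h1, h2⟩)))))
    · exact Or.inr (Or.inr (Or.inr (Or.inr (Or.inl (orb5 x ⟨h1, h2⟩)))))
    · exact Or.inr (Or.inl (orb2 x ⟨h1, h2, h3⟩))
    · exact Or.inr (Or.inr (Or.inl (orb3 x ⟨h1, h2, h3⟩)))
    · exact Or.inr (Or.inr (Or.inr (Or.inl (orb4 x ⟨h1, h2, h3⟩))))
    · exact Or.inr (Or.inr (Or.inr (Or.inr (Or.inr (orb6 x ⟨h1, h2, h3⟩)))))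
  · rintro (rfl | rfl | rfl | rfl | rfl | rfl)
    · exact ⟨_, (orb1 (apt 0 0) ⟨rfl, Or.inl rfl⟩).symm⟩
    · exact ⟨_, (orb2 (apt 0 1) ⟨fun h => zero_ne_one h, Or.inl rfl, Or.inr rfl⟩).symm⟩
    · exact ⟨_, (orb3 (apt 0 a) ⟨fun h => ha.ne h, Or.inl rfl, n1⟩).symm⟩
    · exact ⟨_, (orb4 (apt a 0) ⟨fun h => ha.ne' h, n1, Or.inl rfl⟩).symm⟩
    · exact ⟨_, (orb5 (apt a a) ⟨rfl, n1⟩).symm⟩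
    · exact ⟨_, (orb6 (apt a b) ⟨fun h => hb.ne h, n1, n2⟩).symm⟩
end

section
/- Let 𝒢_𝕆 denote the group of all homeomorphisms of the lexicographically ordered square 𝕆 acting on 𝕆 by evaluation. The set of orbits {𝒢_𝕆·x : x ∈ 𝕆} equals the five-element family { {P₁,P₃}, {P₂,P₄}, L₁ ∪ L₃, L₂ ∪ L₄, (0,1)×(0,1) }. -/
open Set

/-- The unit interval `[0,1]`. -/
local notation "𝕀" => unitInterval

/-- The orbit of a point of the lexicographically ordered square under the full group of
self-homeomorphisms. -/
def lexOrbit (x : 𝕀 × 𝕀) : Set (𝕀 × 𝕀) :=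
  {y | ∃ g : @Homeomorph (𝕀 × 𝕀) (𝕀 × 𝕀) lexTop lexTop, g x = y}

/-- The lexicographic square as a linear order. -/
abbrev LexSq := 𝕀 ×ₗ 𝕀

theorem exists_lub_I (s : Set 𝕀) : ∃ a, IsLUB s a := by
  rcases s.eq_empty_or_nonempty with rfl | h
  · exact ⟨⊥, isLUB_empty⟩
  · exact ⟨sSup s, isLUB_csSup h ⟨⊤, fun _ _ => le_top⟩⟩

theorem exists_lub_L (s : Set LexSq) : ∃ a, IsLUB s a := by
  obtain ⟨a, ha⟩ := exists_lub_I ((fun p : LexSq => (ofLex p).1) '' s)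
  obtain ⟨b, hb⟩ := exists_lub_I {y | toLex (a, y) ∈ s}
  refine ⟨toLex (a, b), ?_, ?_⟩
  · intro p hp
    rw [Prod.Lex.le_iff']
    refine ⟨ha.1 ⟨p, hp, rfl⟩, fun h => hb.1 ?_⟩
    have h' : (ofLex p).1 = a := h
    have : toLex (a, (ofLex p).2) = p := by rw [← h']; rfl
    simpa [this] using hp
  · intro u hu
    rw [Prod.Lex.le_iff']
    refine ⟨ha.2 ?_, fun h => hb.2 ?_⟩
    · rintro _ ⟨p, hp, rfl⟩
      exact (Prod.Lex.le_iff'.1 (hu hp)).1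
    · intro y hy
      exact (Prod.Lex.le_iff'.1 (hu hy)).2 h

theorem exists_glb_L (s : Set LexSq) : ∃ a, IsGLB s a := by
  obtain ⟨a, ha⟩ := exists_lub_L (lowerBounds s)
  exact ⟨a, isLUB_lowerBounds.1 ha⟩

theorem mono_or_anti (g : LexSq → LexSq)
    (hg : @Continuous _ _ (Preorder.topology LexSq) (Preorder.topology LexSq) g)
    (hi : Function.Injective g) : StrictMono g ∨ StrictAnti g := by
  let T : TopologicalSpace LexSq := Preorder.topology LexSq
  let : OrderTopology LexSq := ⟨rfl⟩
  choose S hS using exists_lub_L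
  choose N hN using exists_glb_L
  let C : ConditionallyCompleteLinearOrder LexSq :=
    { (inferInstance : LinearOrder LexSq), (inferInstance : Lattice LexSq) with
      sSup := S
      sInf := N
      isLUB_csSup := fun s _ _ => hS s
      isGLB_csInf := fun s _ _ => hN s
      csSup_of_not_bddAbove := fun s h => (h ⟨⊤, fun _ _ => le_top⟩).elim
      csInf_of_not_bddBelow := fun s h => (h ⟨⊥, fun _ _ => bot_le⟩).elim }
  exact Continuous.strictMono_of_inj_boundedOrder' hg hi

theorem lexTop_eq : lexTop = (Preorder.topology LexSq : TopologicalSpace (Lex (𝕀 × 𝕀))) := by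
  have key : ∀ a b : 𝕀 × 𝕀, lexLT a b ↔ toLex a < toLex b := fun a b =>
    (Prod.Lex.toLex_lt_toLex).symm
  unfold lexTop Preorder.topology
  congr 1
  ext s
  constructor
  · rintro (⟨a, rfl⟩ | ⟨a, rfl⟩)
    · exact ⟨toLex a, Or.inl (by ext x; exact key _ _)⟩
    · exact ⟨toLex a, Or.inr (by ext x; exact key _ _)⟩
  · rintro ⟨a, h | h⟩
    · exact Or.inl ⟨ofLex a, by rw [h]; ext x; exact (key _ _).symm⟩
    · exact Or.inr ⟨ofLex a, by rw [h]; ext x; exact (key _ _).symm⟩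

/-- The flip `(x,y) ↦ (1-x,1-y)`. -/
def flipL (p : 𝕀 × 𝕀) : 𝕀 × 𝕀 := (unitInterval.symm p.1, unitInterval.symm p.2)

theorem flipL_flipL (p : 𝕀 × 𝕀) : flipL (flipL p) = p := by simp [flipL]

theorem flip_lt {p q : 𝕀 × 𝕀} : toLex (flipL p) < toLex (flipL q) ↔ toLex q < toLex p := by
  rw [Prod.Lex.toLex_lt_toLex, Prod.Lex.toLex_lt_toLex]
  simp only [flipL, unitInterval.symm_lt_symm, unitInterval.symm_inj, eq_comm]

theorem flip_homeo : ∃ g : @Homeomorph (𝕀 × 𝕀) (𝕀 × 𝕀) lexTop lexTop, ∀ x, g x = flipL x := by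
  have hc : @Continuous _ _ lexTop lexTop flipL := by
    have key : ∀ a b : 𝕀 × 𝕀, lexLT a b ↔ toLex a < toLex b := fun a b =>
      (Prod.Lex.toLex_lt_toLex).symm
    have k2 : ∀ a b : 𝕀 × 𝕀, lexLT a (flipL b) ↔ lexLT b (flipL a) := fun a b => by
      rw [key, key, ← flip_lt, flipL_flipL]
    have k3 : ∀ a b : 𝕀 × 𝕀, lexLT (flipL b) a ↔ lexLT (flipL a) b := fun a b => by
      rw [key, key, ← flip_lt, flipL_flipL]
    refine continuous_generateFrom_iff.2 ?_
    rintro s (⟨a, rfl⟩ | ⟨a, rfl⟩)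
    · exact TopologicalSpace.isOpen_generateFrom_of_mem
        (Or.inr ⟨flipL a, by ext x; exact k2 _ _⟩)
    · exact TopologicalSpace.isOpen_generateFrom_of_mem
        (Or.inl ⟨flipL a, by ext x; exact k3 _ _⟩)
  exact ⟨@Homeomorph.mk _ _ lexTop lexTop ⟨flipL, flipL, flipL_flipL, flipL_flipL⟩ hc hc, fun x => rfl⟩

theorem iso_homeo (e : LexSq ≃o LexSq) :
    ∃ g : @Homeomorph (𝕀 × 𝕀) (𝕀 × 𝕀) lexTop lexTop, ∀ x, g x = ofLex (e (toLex x)) := by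
  rw [lexTop_eq]
  let T : TopologicalSpace LexSq := Preorder.topology LexSq
  let : OrderTopology LexSq := ⟨rfl⟩
  exact ⟨e.toHomeomorph, fun x => rfl⟩

theorem homeo_iso (g : @Homeomorph (𝕀 × 𝕀) (𝕀 × 𝕀) lexTop lexTop) :
    (∃ e : LexSq ≃o LexSq, ∀ x, e (toLex x) = toLex (g x)) ∨
    (∃ e : LexSq ≃o LexSq, ∀ x, e (toLex x) = toLex (flipL (g x))) := by
  obtain ⟨f, hf⟩ : ∃ f : 𝕀 × 𝕀 → 𝕀 × 𝕀, f = g := ⟨_, rfl⟩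
  have hc : @Continuous _ _ lexTop lexTop f := by
    rw [hf]; exact @Homeomorph.continuous _ _ lexTop lexTop g
  have hb : Function.Bijective g := @Homeomorph.bijective _ _ lexTop lexTop g
  rw [lexTop_eq] at hc
  rw [hf] at hc
  rcases mono_or_anti (fun x => toLex (g (ofLex x))) hc (fun a b h => hb.1 h) with h | h
  · exact Or.inl ⟨h.orderIsoOfSurjective _ (fun y => hb.2 y), fun x => rfl⟩
  · refine Or.inr ⟨StrictMono.orderIsoOfSurjective (fun x => toLex (flipL (g (ofLex x)))) ?_ ?_,
      fun x => rfl⟩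
    · intro a b hab
      exact flip_lt.2 (h hab)
    · intro y
      obtain ⟨x, hx⟩ := hb.2 (flipL (ofLex y))
      exact ⟨toLex x, by simp [hx, flipL_flipL]⟩

theorem fiber_iff {p q : LexSq} (hpq : p ≤ q) :
    (∃ f : LexSq → ℝ, StrictMonoOn f (Icc p q)) ↔ (ofLex p).1 = (ofLex q).1 := by
  constructor
  · rintro ⟨f, hf⟩
    by_contra hne
    have hlt : (ofLex p).1 < (ofLex q).1 :=
      lt_of_le_of_ne (Prod.Lex.le_iff'.1 hpq).1 hne
    have hmem : ∀ x ∈ Ioo (ofLex p).1 (ofLex q).1, ∀ y, toLex (x, y) ∈ Icc p q := fun x hx y =>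
      ⟨Prod.Lex.le_iff.2 (Or.inl hx.1), Prod.Lex.le_iff.2 (Or.inl hx.2)⟩
    have hr : ∀ x : Ioo (ofLex p).1 (ofLex q).1, ∃ r : ℚ,
        f (toLex (x.1, 0)) < r ∧ (r : ℝ) < f (toLex (x.1, 1)) := fun x =>
      exists_rat_btwn (hf (hmem _ x.2 _) (hmem _ x.2 _)
        (Prod.Lex.lt_iff.2 (Or.inr ⟨rfl, by exact zero_lt_one⟩)))
    choose r hr1 hr2 using hr
    have hmono : StrictMono r := by
      intro x y hxy
      have : f (toLex (x.1, 1)) < f (toLex (y.1, 0)) :=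
        hf (hmem _ x.2 _) (hmem _ y.2 _) (Prod.Lex.lt_iff.2 (Or.inl hxy))
      exact_mod_cast (hr2 x).trans (this.trans (hr1 y))
    have hcount : Countable (Ioo (ofLex p).1 (ofLex q).1) := hmono.injective.countable
    have hcount2 : (Ioo ((ofLex p).1 : ℝ) ((ofLex q).1 : ℝ)).Countable := by
      have := (Set.countable_coe_iff.1 hcount).image (Subtype.val : 𝕀 → ℝ)
      refine this.mono ?_
      intro x hx
      exact ⟨⟨x, (ofLex p).1.2.1.trans hx.1.le, hx.2.le.trans (ofLex q).1.2.2⟩, hx, rfl⟩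
    exact absurd (Cardinal.Real.Ioo_countable_iff.1 hcount2) (not_le.2 hlt)
  · intro h
    refine ⟨fun x => ((ofLex x).2 : ℝ), ?_⟩
    intro x hx y hy hxy
    have h1 := (Prod.Lex.le_iff'.1 hx.1).1
    have h2 := (Prod.Lex.le_iff'.1 hx.2).1
    have h3 := (Prod.Lex.le_iff'.1 hy.1).1
    have h4 := (Prod.Lex.le_iff'.1 hy.2).1
    exact (Prod.Lex.lt_iff'.1 hxy).2
      ((le_antisymm (h2.trans h.ge) h1).trans (le_antisymm h3 (h4.trans h.ge)))

theorem fiber_map (e : LexSq ≃o LexSq) {p q : LexSq} (h : (ofLex p).1 = (ofLex q).1) :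
    (ofLex (e p)).1 = (ofLex (e q)).1 := by
  wlog hpq : p ≤ q generalizing p q
  · exact (this h.symm (le_of_not_ge hpq)).symm
  obtain ⟨f, hf⟩ := (fiber_iff hpq).2 h
  refine (fiber_iff (e.monotone hpq)).1 ⟨fun x => f (e.symm x), ?_⟩
  intro x hx y hy hxy
  refine hf ?_ ?_ (e.symm.strictMono hxy)
  · exact ⟨e.le_symm_apply.2 hx.1, e.symm_apply_le.2 hx.2⟩
  · exact ⟨e.le_symm_apply.2 hy.1, e.symm_apply_le.2 hy.2⟩

theorem fiber_symm (e : LexSq ≃o LexSq) {p q : LexSq} (h : (ofLex (e p)).1 = (ofLex q).1) :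
    (ofLex p).1 = (ofLex (e.symm q)).1 := by
  simpa using fiber_map e.symm h

theorem inv1 (e : LexSq ≃o LexSq) {p : LexSq} (h : (ofLex p).1 = 0) : (ofLex (e p)).1 = 0 := by
  have := fiber_map e (p := p) (q := ⊥) h
  rw [e.map_bot] at this
  exact this

theorem inv2 (e : LexSq ≃o LexSq) {p : LexSq} (h : (ofLex p).1 = 1) : (ofLex (e p)).1 = 1 := by
  have := fiber_map e (p := p) (q := ⊤) h
  rw [e.map_top] at this
  exact this

theorem inv3_s12 (e : LexSq ≃o LexSq) {p : LexSq} (h : (ofLex p).2 = 0) : (ofLex (e p)).2 = 0 := by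
  have h1 := fiber_symm e (p := p) (q := toLex ((ofLex (e p)).1, 0)) rfl
  have h2 : p ≤ e.symm (toLex ((ofLex (e p)).1, 0)) :=
    Prod.Lex.le_iff'.2 ⟨h1.le, fun _ => by rw [h]; exact unitInterval.nonneg'⟩
  have h3 := (Prod.Lex.le_iff'.1 (e.le_symm_apply.1 h2)).2 rfl
  exact le_antisymm h3 unitInterval.nonneg'

theorem inv4 (e : LexSq ≃o LexSq) {p : LexSq} (h : (ofLex p).2 = 1) : (ofLex (e p)).2 = 1 := by
  have h1 := fiber_symm e (p := p) (q := toLex ((ofLex (e p)).1, 1)) rfl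
  have h2 : e.symm (toLex ((ofLex (e p)).1, 1)) ≤ p :=
    Prod.Lex.le_iff'.2 ⟨h1.ge, fun _ => by rw [h]; exact unitInterval.le_one'⟩
  have h3 := (Prod.Lex.le_iff'.1 (e.symm_apply_le.1 h2)).2 rfl
  exact le_antisymm unitInterval.le_one' h3

/-- Two points have the same position relative to the sides. -/
def SameType (x y : 𝕀 × 𝕀) : Prop :=
  ((y.1 = 0 ↔ x.1 = 0) ∧ (y.1 = 1 ↔ x.1 = 1)) ∧ ((y.2 = 0 ↔ x.2 = 0) ∧ (y.2 = 1 ↔ x.2 = 1))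

theorem sameType_iso (e : LexSq ≃o LexSq) (p : LexSq) : SameType (ofLex p) (ofLex (e p)) := by
  refine ⟨⟨⟨fun h => ?_, inv1 e⟩, ⟨fun h => ?_, inv2 e⟩⟩,
    ⟨⟨fun h => ?_, inv3_s12 e⟩, ⟨fun h => ?_, inv4 e⟩⟩⟩
  · simpa using inv1 e.symm h
  · simpa using inv2 e.symm h
  · simpa using inv3_s12 e.symm h
  · simpa using inv4 e.symm h

theorem exists_iso_I {a b : 𝕀} (h0 : b = 0 ↔ a = 0) (h1 : b = 1 ↔ a = 1) :
    ∃ h : 𝕀 ≃o 𝕀, h a = b := by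
  by_cases ha0 : a = 0
  · exact ⟨OrderIso.refl _, by rw [h0.2 ha0, ha0]; rfl⟩
  by_cases ha1 : a = 1
  · exact ⟨OrderIso.refl _, by rw [h1.2 ha1, ha1]; rfl⟩
  have pa : 0 < (a : ℝ) := unitInterval.pos_iff_ne_zero.2 ha0
  have pb : 0 < (b : ℝ) := unitInterval.pos_iff_ne_zero.2 (fun h => ha0 (h0.1 h))
  have la : (a : ℝ) < 1 := unitInterval.lt_one_iff_ne_one.2 ha1
  have lb : (b : ℝ) < 1 := unitInterval.lt_one_iff_ne_one.2 (fun h => ha1 (h1.1 h))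
  have na := Real.log_neg pa la
  have nb := Real.log_neg pb lb
  set c : ℝ := Real.log b / Real.log a with hc
  have pc : 0 < c := div_pos_of_neg_of_neg nb na
  let f : 𝕀 → 𝕀 := fun t => ⟨(t : ℝ) ^ c, Real.rpow_nonneg t.2.1 _,
    Real.rpow_le_one t.2.1 t.2.2 pc.le⟩
  have hm : StrictMono f := fun x y hxy => Real.rpow_lt_rpow x.2.1 hxy pc
  have hs : Function.Surjective f := by
    intro y
    refine ⟨⟨(y : ℝ) ^ (c⁻¹), Real.rpow_nonneg y.2.1 _,
      Real.rpow_le_one y.2.1 y.2.2 (inv_pos.2 pc).le⟩, ?_⟩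
    apply Subtype.ext
    exact Real.rpow_inv_rpow y.2.1 pc.ne'
  refine ⟨hm.orderIsoOfSurjective f hs, ?_⟩
  apply Subtype.ext
  change (a : ℝ) ^ c = b
  rw [Real.rpow_def_of_pos pa, hc, mul_div_cancel₀ _ na.ne, Real.exp_log pb]

theorem exists_homeo {x y : 𝕀 × 𝕀} (h : SameType x y) :
    ∃ g : @Homeomorph (𝕀 × 𝕀) (𝕀 × 𝕀) lexTop lexTop, g x = y := by
  obtain ⟨u, hu⟩ := exists_iso_I h.1.1 h.1.2
  obtain ⟨v, hv⟩ := exists_iso_I h.2.1 h.2.2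
  obtain ⟨g, hg⟩ := iso_homeo (Prod.Lex.prodLexCongr u v)
  refine ⟨g, ?_⟩
  rw [hg]
  exact Prod.ext hu hv

theorem mem_orbit_iff (x y : 𝕀 × 𝕀) :
    y ∈ lexOrbit x ↔ SameType x y ∨ SameType x (flipL y) := by
  constructor
  · rintro ⟨g, rfl⟩
    rcases homeo_iso g with ⟨e, he⟩ | ⟨e, he⟩
    · left
      have := sameType_iso e (toLex x)
      rw [he] at this
      exact this
    · right
      have := sameType_iso e (toLex x)
      rw [he] at this
      exact this
  · rintro (h | h)
    · exact exists_homeo h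
    · obtain ⟨g, hg⟩ := exists_homeo h
      obtain ⟨s, hs⟩ := flip_homeo
      refine ⟨@Homeomorph.trans _ _ _ lexTop lexTop lexTop g s, ?_⟩
      change s (g x) = y
      rw [hg, hs, flipL_flipL]

theorem I_mem (a : 𝕀) : a ∈ Ioo (0 : 𝕀) 1 ↔ a ≠ 0 ∧ a ≠ 1 := by
  rw [mem_Ioo, unitInterval.pos_iff_ne_zero, unitInterval.lt_one_iff_ne_one]

theorem mem_orbit_iff' (x y : 𝕀 × 𝕀) :
    y ∈ lexOrbit x ↔
      (((y.1 = 0 ↔ x.1 = 0) ∧ (y.1 = 1 ↔ x.1 = 1)) ∧ ((y.2 = 0 ↔ x.2 = 0) ∧ (y.2 = 1 ↔ x.2 = 1)))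
      ∨ (((y.1 = 1 ↔ x.1 = 0) ∧ (y.1 = 0 ↔ x.1 = 1)) ∧
        ((y.2 = 1 ↔ x.2 = 0) ∧ (y.2 = 0 ↔ x.2 = 1))) := by
  rw [mem_orbit_iff]
  simp only [SameType, flipL, unitInterval.symm_eq_zero, unitInterval.symm_eq_one]

theorem orbit_P1 {x : 𝕀 × 𝕀} (h : x.1 = 0 ∧ x.2 = 0 ∨ x.1 = 1 ∧ x.2 = 1) :
    lexOrbit x = {P₁, P₃} := by
  ext y
  have h01 : (0 : 𝕀) ≠ 1 := zero_ne_one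
  rw [mem_orbit_iff']
  simp only [mem_insert_iff, mem_singleton_iff, P₁, P₃, Prod.ext_iff]
  grind

theorem orbit_P2 {x : 𝕀 × 𝕀} (h : x.1 = 0 ∧ x.2 = 1 ∨ x.1 = 1 ∧ x.2 = 0) :
    lexOrbit x = {P₂, P₄} := by
  ext y
  have h01 : (0 : 𝕀) ≠ 1 := zero_ne_one
  rw [mem_orbit_iff']
  simp only [mem_insert_iff, mem_singleton_iff, P₂, P₄, Prod.ext_iff]
  grind

theorem orbit_L1 {x : 𝕀 × 𝕀} (h : (x.1 = 0 ∨ x.1 = 1) ∧ x.2 ≠ 0 ∧ x.2 ≠ 1) :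
    lexOrbit x = L₁ ∪ L₃ := by
  ext y
  have h01 : (0 : 𝕀) ≠ 1 := zero_ne_one
  rw [mem_orbit_iff']
  simp only [mem_union, mem_prod, mem_singleton_iff, L₁, L₃, I_mem]
  grind

theorem orbit_L2 {x : 𝕀 × 𝕀} (h : (x.2 = 0 ∨ x.2 = 1) ∧ x.1 ≠ 0 ∧ x.1 ≠ 1) :
    lexOrbit x = L₂ ∪ L₄ := by
  ext y
  have h01 : (0 : 𝕀) ≠ 1 := zero_ne_one
  rw [mem_orbit_iff']
  simp only [mem_union, mem_prod, mem_singleton_iff, L₂, L₄, I_mem]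
  grind

theorem orbit_int {x : 𝕀 × 𝕀} (h : (x.1 ≠ 0 ∧ x.1 ≠ 1) ∧ x.2 ≠ 0 ∧ x.2 ≠ 1) :
    lexOrbit x = (Ioo (0 : 𝕀) 1) ×ˢ (Ioo (0 : 𝕀) 1) := by
  ext y
  have h01 : (0 : 𝕀) ≠ 1 := zero_ne_one
  rw [mem_orbit_iff']
  simp only [mem_prod, I_mem]
  grind

/-- The orbits of the full homeomorphism group of the lexicographically ordered square
are exactly `{P₁,P₃}`, `{P₂,P₄}`, `L₁ ∪ L₃`, `L₂ ∪ L₄` and `(0,1)×(0,1)`. -/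
theorem lex_square_orbit_space :
    {S | ∃ x : 𝕀 × 𝕀, S = lexOrbit x} =
      ({{P₁, P₃}, {P₂, P₄}, L₁ ∪ L₃, L₂ ∪ L₄,
        (Ioo (0 : 𝕀) 1) ×ˢ (Ioo (0 : 𝕀) 1)} : Set (Set (𝕀 × 𝕀))) := by
  obtain ⟨m, hm⟩ : ∃ m : 𝕀, m ≠ 0 ∧ m ≠ 1 := by
    obtain ⟨m, hm⟩ := exists_between (zero_lt_one : (0 : 𝕀) < 1)
    exact ⟨m, hm.1.ne', hm.2.ne⟩
  ext S
  simp only [mem_ofPred_eq, mem_insert_iff, mem_singleton_iff]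
  constructor
  · rintro ⟨x, rfl⟩
    by_cases h1 : (x.1 = 0 ∧ x.2 = 0 ∨ x.1 = 1 ∧ x.2 = 1)
    · exact Or.inl (orbit_P1 h1)
    by_cases h2 : (x.1 = 0 ∧ x.2 = 1 ∨ x.1 = 1 ∧ x.2 = 0)
    · exact Or.inr (Or.inl (orbit_P2 h2))
    by_cases h3 : (x.1 = 0 ∨ x.1 = 1) ∧ x.2 ≠ 0 ∧ x.2 ≠ 1
    · exact Or.inr (Or.inr (Or.inl (orbit_L1 h3)))
    by_cases h4 : (x.2 = 0 ∨ x.2 = 1) ∧ x.1 ≠ 0 ∧ x.1 ≠ 1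
    · exact Or.inr (Or.inr (Or.inr (Or.inl (orbit_L2 h4))))
    · exact Or.inr (Or.inr (Or.inr (Or.inr (orbit_int (by tauto)))))
  · rintro (rfl | rfl | rfl | rfl | rfl)
    · exact ⟨(0, 0), (orbit_P1 (by simp)).symm⟩
    · exact ⟨(0, 1), (orbit_P2 (by simp)).symm⟩
    · exact ⟨(0, m), (orbit_L1 (by simpa using hm)).symm⟩
    · exact ⟨(m, 0), (orbit_L2 (by simpa using hm)).symm⟩
    · exact ⟨(m, m), (orbit_int ⟨hm, hm⟩).symm⟩
end
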